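/- arXiv:2004.10903 — 4 statements merged into one kernel-verified Lean document; each statement's English description precedes it below -/
import Mathlib

section
/- Let n ≥ 2, ω = exp(2πi/n), let Aₙ ∈ Mₙ(ℂ) be the diagonal matrix with (Aₙ)_{jj} = ω^j for j = 0,…,n−1, let Fₙ be the Fourier matrix with entries (Fₙ)_{jk} = ω^{jk}, and let B̂ₙ be the cyclic shift matrix with (B̂ₙ)_{jk} = 1 if j ≡ k+1 (mod n) and 0 otherwise. Let P₁, P₂ ∈ Mₙ(ℂ) be permutation matrices and set B = (1/n)·P₂ᵀ Fₙᴴ P₁ᵀ Aₙ P₁ Fₙ P₂. Suppose P₂ is the permutation matrix of a permutation π of {0,…,n−1} for which there exist integers q, m with gcd(q,n) = 1 and π(j) ≡ qj + m (mod n) for all j. Then {(x,y,z) ∈ ℂ³ : det(x·Aₙ + y·B + z·AₙB − I) = 0} = {(x,y,z) ∈ ℂ³ : xⁿ + yⁿ + (−1)^{n−1} zⁿ = 1}, and there exist a permutation matrix P ∈ Mₙ(ℂ) and a unitary U ∈ Mₙ(ℂ) with U Aₙ Uᴴ = B̂ₙ and U B Uᴴ = Pᵀ Aₙ P. -/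
open Matrix Complex

noncomputable section

/-- A permutation matrix: the matrix of a permutation `σ`, sending the standard
basis vector `e j` to `e (σ j)`. -/
def IsPermMatrix {n : ℕ} (P : Matrix (Fin n) (Fin n) ℂ) : Prop :=
  ∃ σ : Equiv.Perm (Fin n),
    P = Matrix.of fun i j : Fin n => if i = σ j then 1 else 0

/-! Conjugation by the unitary inverse Fourier matrix turns the clock matrix `A` into the cyclic
shift. It turns `B` into `n⁻² • Vᴴ * D * V`, where `D = P₁ᵀ * A * P₁` and `V = F * P₂ * F`. Since
`π` is affine with invertible slope, orthogonality of characters collapses each entry of `V` to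
`0` or `n` times a root of unity, so that `V` is monomial and `B` becomes a diagonal matrix whose
entries are again all the `n`-th roots of unity. The pencil is then a diagonal matrix plus an
`n`-cycle permutation matrix times a diagonal matrix; only the identity and the `n`-cycle
contribute to the Leibniz expansion of its determinant, and each of the two products has the form
`∏ (u - ζ * v) = u ^ n - v ^ n`, with `ζ` running over the `n`-th roots of unity. -/

section FullCycle

variable {ι : Type*} [Fintype ι] [DecidableEq ι]

theorem perm_eq_one_or_eq_of_isCycle {σ τ : Equiv.Perm ι} (hσ : σ.IsCycle)
    (hsupp : σ.support = Finset.univ) (hτ : ∀ i, τ i = i ∨ τ i = σ i) : τ = 1 ∨ τ = σ := by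
  have hmove (i : ι) : σ i ≠ i := Equiv.Perm.mem_support.1 (hsupp ▸ Finset.mem_univ i)
  by_cases hagree : ∃ i, τ i = σ i
  · obtain ⟨i, hi⟩ := hagree
    have hstable : Set.MapsTo σ {j | τ j = σ j} {j | τ j = σ j} := fun j hj ↦
      (hτ (σ j)).resolve_left fun hfix ↦ hmove j (τ.injective (hfix.trans hj.symm))
    refine .inr (Equiv.ext fun j ↦ ?_)
    obtain ⟨k, rfl⟩ := hσ.exists_pow_eq (hmove i) (hmove j)
    exact hstable.perm_pow k hi
  · exact .inl (Equiv.ext fun i ↦ (hτ i).resolve_right fun hi ↦ hagree ⟨i, hi⟩)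

theorem det_diagonal_add_permMatrix_mul_diagonal {R : Type*} [CommRing R] {σ : Equiv.Perm ι}
    (hσ : σ.IsCycle) (hsupp : σ.support = Finset.univ) (a b : ι → R) :
    (diagonal a + (σ⁻¹).permMatrix R * diagonal b).det =
      ∏ i, a i + Equiv.Perm.sign σ * ∏ i, b i := by
  have hmove (i : ι) : σ i ≠ i := Equiv.Perm.mem_support.1 (hsupp ▸ Finset.mem_univ i)
  have hentry (i j : ι) : (diagonal a + (σ⁻¹).permMatrix R * diagonal b) i j =
      (if i = j then a j else 0) + if i = σ j then b j else 0 := by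
    by_cases h : i = j <;> simp [h, PEquiv.toMatrix_apply, Equiv.symm_apply_eq]
  rw [det_apply', Fintype.sum_eq_add 1 σ hσ.ne_one.symm]
  · simp [hentry, hmove, (hmove _).symm]
  · rintro τ ⟨hτ_one, hτ_ne⟩
    obtain ⟨i, hi, hi'⟩ : ∃ i, τ i ≠ i ∧ τ i ≠ σ i := by
      by_contra! h
      exact (perm_eq_one_or_eq_of_isCycle hσ hsupp fun i ↦ or_iff_not_imp_left.2 (h i)).elim
        hτ_one hτ_ne
    rw [Finset.prod_eq_zero (Finset.mem_univ i) (by simp [hentry, hi, hi']), mul_zero]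

end FullCycle

theorem prod_sub_pow_mul_eq_pow_sub_pow {R : Type*} [CommRing R] [IsDomain R] {n : ℕ} {ω : R}
    (hn : 0 < n) (hω : IsPrimitiveRoot ω n) (x y : R) :
    ∏ j : Fin n, (x - ω ^ (j : ℕ) * y) = x ^ n - y ^ n := by
  classical
  have hroots : Polynomial.nthRootsFinset n (1 : R) = (Finset.range n).image (ω ^ ·) := by
    ext ζ
    simp [Polynomial.nthRootsFinset_def, hω.nthRoots_eq (one_pow n)]
  rw [hω.pow_sub_pow_eq_prod_sub_mul x y hn, hroots,
    Finset.prod_image fun i hi j hj ↦ hω.pow_inj (Finset.mem_range.1 hi) (Finset.mem_range.1 hj),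
    Finset.prod_range]

theorem det_shift_clock_pencil {K : Type*} [CommRing K] [IsDomain K] {n : ℕ} (hn : 2 ≤ n) {ω : K}
    (hω : IsPrimitiveRoot ω n) (τ : Equiv.Perm (Fin n)) (x y z : K) :
    let S := ((finRotate n)⁻¹).permMatrix K
    let D := diagonal fun j ↦ ω ^ (τ j : ℕ)
    (x • S + y • D + z • (S * D) - 1).det =
      (-1) ^ n * (1 - (x ^ n + y ^ n + (-1) ^ (n - 1) * z ^ n)) := by
  intro S D
  have hprod (u v : K) : ∏ j, (u - ω ^ (τ j : ℕ) * v) = u ^ n - v ^ n := by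
    rw [← prod_sub_pow_mul_eq_pow_sub_pow (by omega) hω,
      Equiv.prod_comp τ fun j ↦ u - ω ^ (j : ℕ) * v]
  have hdiag : ∏ j, (ω ^ (τ j : ℕ) * y - 1) = (-1) ^ n * (1 - y ^ n) := by
    rw [← one_pow (M := K) n, ← hprod, one_pow, ← Fin.prod_const, ← Finset.prod_mul_distrib]
    simp only [neg_one_mul, neg_sub]
  have hshift : ∏ j, (x + ω ^ (τ j : ℕ) * z) = x ^ n - (-1) ^ n * z ^ n := by
    simpa only [mul_neg, sub_neg_eq_add, neg_pow z] using hprod x (-z)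
  have hsplit : x • S + y • D + z • (S * D) - 1 =
      diagonal (fun j ↦ ω ^ (τ j : ℕ) * y - 1) +
        S * diagonal (fun j ↦ x + ω ^ (τ j : ℕ) * z) := by
    ext i j
    simp only [D, Matrix.sub_apply, Matrix.add_apply, Matrix.smul_apply, smul_eq_mul, mul_diagonal,
      diagonal_apply, one_apply]
    split_ifs with hij
    · rw [hij]
      ring
    · ring
  rw [hsplit, det_diagonal_add_permMatrix_mul_diagonal (isCycle_finRotate_of_le hn)
    (support_finRotate_of_le hn), hdiag, hshift, sign_finRotate]
  obtain ⟨k, rfl⟩ : ∃ k, n = k + 1 := ⟨n - 1, by omega⟩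
  push_cast [Nat.add_sub_cancel]
  ring

theorem det_pencil_conj {ι R : Type*} [Fintype ι] [DecidableEq ι] [CommRing R]
    {U V : Matrix ι ι R} (hUV : U * V = 1) (A B : Matrix ι ι R) (x y z : R) :
    (x • (U * A * V) + y • (U * B * V) + z • (U * A * V * (U * B * V)) - 1).det =
      (x • A + y • B + z • (A * B) - 1).det := by
  have hVU : V * U = 1 := mul_eq_one_comm.1 hUV
  have hAB : U * A * V * (U * B * V) = U * (A * B) * V := by
    rw [show U * A * V * (U * B * V) = U * A * (V * U) * B * V by noncomm_ring, hVU]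
    noncomm_ring
  have hconj : x • (U * A * V) + y • (U * B * V) + z • (U * A * V * (U * B * V)) - 1 =
      U * (x • A + y • B + z • (A * B) - 1) * V := by
    simp only [hAB, Matrix.mul_add, Matrix.mul_sub, Matrix.add_mul, Matrix.sub_mul,
      Matrix.mul_smul, Matrix.smul_mul, Matrix.mul_one, hUV]
  rw [hconj, det_mul, det_mul, mul_right_comm, ← det_mul, hUV, det_one, one_mul]

section PermMatrix

variable {ι R : Type*} [DecidableEq ι]

theorem of_ite_eq_permMatrix_inv [Zero R] [One R] (σ : Equiv.Perm ι) :
    (of fun i j ↦ if i = σ j then (1 : R) else 0) = (σ⁻¹).permMatrix R := by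
  ext i j
  simp [PEquiv.toMatrix_apply, Equiv.symm_apply_eq]

theorem permMatrix_mul_diagonal_mul_permMatrix_inv [Fintype ι] [NonAssocSemiring R]
    (σ : Equiv.Perm ι) (d : ι → R) :
    σ.permMatrix R * diagonal d * (σ⁻¹).permMatrix R = diagonal (d ∘ σ) := by
  rw [PEquiv.toMatrix_toPEquiv_mul, PEquiv.mul_toMatrix_toPEquiv, ← Equiv.Perm.inv_def, inv_inv,
    submatrix_submatrix]
  exact submatrix_diagonal d σ σ.injective

end PermMatrix

section Fourier

variable {R K 𝕜 : Type*} [CommRing R] [CommRing K] [RCLike 𝕜]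

/-- The Fourier matrix `(ψ (j * k))` of an additive character `ψ` of a ring; the classical one is
that of the character `j ↦ ω ^ j` of the integers modulo `n`. -/
def fourierMatrix (ψ : AddChar R K) : Matrix R R K :=
  of fun j k ↦ ψ (j * k)

theorem conjTranspose_fourierMatrix [Finite R] (ψ : AddChar R 𝕜) :
    (fourierMatrix ψ)ᴴ = fourierMatrix ψ⁻¹ := by
  ext j k
  simp [fourierMatrix, mul_comm, AddChar.map_neg_eq_conj]

variable [Fintype R]

/-- The unitary matrix of the inverse discrete Fourier transform: the conjugate transpose of the
Fourier matrix of `ψ`, divided by `√|R|`. It is unitary when `ψ` is primitive. -/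
def unitaryFourier (ψ : AddChar R 𝕜) : Matrix R R 𝕜 :=
  ((√(Fintype.card R) : ℝ) : 𝕜)⁻¹ • (fourierMatrix ψ)ᴴ

theorem unitaryFourier_mul_mul_conjTranspose (ψ : AddChar R 𝕜) (M : Matrix R R 𝕜) :
    unitaryFourier ψ * M * (unitaryFourier ψ)ᴴ =
      (Fintype.card R : 𝕜)⁻¹ • ((fourierMatrix ψ)ᴴ * M * fourierMatrix ψ) := by
  have hsqrt : ((√(Fintype.card R) : ℝ) : 𝕜) * (√(Fintype.card R) : ℝ) = Fintype.card R := by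
    rw [← RCLike.ofReal_mul, Real.mul_self_sqrt (Nat.cast_nonneg _), RCLike.ofReal_natCast]
  simp [unitaryFourier, smul_smul, ← mul_inv, hsqrt]

variable [DecidableEq R]

theorem fourierMatrix_inv_mul_diagonal_mul_fourierMatrix [IsDomain K] {ψ : AddChar R K}
    (hψ : ψ.IsPrimitive) (t : R) :
    fourierMatrix ψ⁻¹ * diagonal (fun a ↦ ψ (a * t)) * fourierMatrix ψ =
      (Fintype.card R : K) • ((Equiv.addRight t)⁻¹ : Equiv.Perm R).permMatrix K := by
  ext j k
  have hterm (a : R) :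
      (fourierMatrix ψ⁻¹ * diagonal fun a ↦ ψ (a * t)) j a * fourierMatrix ψ a k =
        ψ (a * (k + t - j)) := by
    simp only [mul_diagonal, fourierMatrix, of_apply, AddChar.inv_apply,
      ← AddChar.map_add_eq_mul]
    ring_nf
  rw [Matrix.mul_apply, Finset.sum_congr rfl fun a _ ↦ hterm a, AddChar.sum_mulShift _ hψ,
    ← of_ite_eq_permMatrix_inv]
  by_cases h : j = k + t <;> simp [sub_eq_zero, eq_comm (b := j), h]

theorem fourierMatrix_mul_permMatrix_mul_fourierMatrix [IsDomain K] {ψ : AddChar R K}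
    (hψ : ψ.IsPrimitive) {π : Equiv.Perm R} {q : Rˣ} {m : R} (hπ : ∀ j, π j = q * j + m) :
    fourierMatrix ψ * (π⁻¹).permMatrix K * fourierMatrix ψ =
      (Fintype.card R : K) •
        (diagonal (fun j ↦ ψ (j * m)) * ((-q⁻¹).mulLeft⁻¹).permMatrix K) := by
  ext j k
  have hterm (a : R) : (fourierMatrix ψ * (π⁻¹).permMatrix K) j a * fourierMatrix ψ a k =
      ψ (j * m) * ψ (a * (q * j + k)) := by
    rw [PEquiv.mul_toMatrix_toPEquiv, ← Equiv.Perm.inv_def, inv_inv]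
    simp only [submatrix_apply, id, fourierMatrix, of_apply, hπ, ← AddChar.map_add_eq_mul]
    ring_nf
  have hzero : q * j + k = 0 ↔ j = -(q⁻¹ * k) := by
    rw [← mul_neg, Units.eq_inv_mul_iff_mul_eq, eq_neg_iff_add_eq_zero]
  rw [Matrix.mul_apply, Finset.sum_congr rfl fun a _ ↦ hterm a, ← Finset.mul_sum,
    AddChar.sum_mulShift _ hψ, ← of_ite_eq_permMatrix_inv]
  simp only [hzero]
  simp [mul_comm]

variable {ψ : AddChar R 𝕜}

theorem unitaryFourier_conj_diagonal (hψ : ψ.IsPrimitive) (t : R) :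
    unitaryFourier ψ * diagonal (fun a ↦ ψ (a * t)) * (unitaryFourier ψ)ᴴ =
      ((Equiv.addRight t)⁻¹ : Equiv.Perm R).permMatrix 𝕜 := by
  rw [unitaryFourier_mul_mul_conjTranspose, conjTranspose_fourierMatrix,
    fourierMatrix_inv_mul_diagonal_mul_fourierMatrix hψ,
    inv_smul_smul₀ (Nat.cast_ne_zero.2 Fintype.card_ne_zero)]

theorem unitaryFourier_mul_conjTranspose (hψ : ψ.IsPrimitive) :
    unitaryFourier ψ * (unitaryFourier ψ)ᴴ = 1 := by
  simpa using unitaryFourier_conj_diagonal hψ 0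

theorem unitaryFourier_conj_permuted_fourier_conj_diagonal (hψ : ψ.IsPrimitive)
    {π : Equiv.Perm R} {q : Rˣ} {m : R} (hπ : ∀ j, π j = q * j + m) (d : R → 𝕜) :
    unitaryFourier ψ * ((Fintype.card R : 𝕜)⁻¹ • (π.permMatrix 𝕜 * (fourierMatrix ψ)ᴴ *
      diagonal d * fourierMatrix ψ * (π⁻¹).permMatrix 𝕜)) * (unitaryFourier ψ)ᴴ =
        diagonal (d ∘ (-q⁻¹).mulLeft) := by
  have hcard : (Fintype.card R : 𝕜) ≠ 0 := Nat.cast_ne_zero.2 Fintype.card_ne_zero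
  set V := fourierMatrix ψ * (π⁻¹).permMatrix 𝕜 * fourierMatrix ψ with hV
  let Φ : Matrix R R 𝕜 := diagonal fun j ↦ ψ (j * m)
  have hphase : Φᴴ * diagonal d * Φ = diagonal d := by
    rw [diagonal_conjTranspose, diagonal_mul_diagonal, diagonal_mul_diagonal]
    refine congrArg diagonal (funext fun j ↦ ?_)
    simp only [Pi.star_apply, RCLike.star_def]
    rw [mul_right_comm, ← AddChar.map_neg_eq_conj, ← AddChar.map_add_eq_mul, neg_add_cancel,
      AddChar.map_zero_eq_one, one_mul]
  have hmonomial : V = (Fintype.card R : 𝕜) • (Φ * ((-q⁻¹).mulLeft⁻¹).permMatrix 𝕜) :=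
    fourierMatrix_mul_permMatrix_mul_fourierMatrix hψ hπ
  have hconj : Vᴴ * diagonal d * V =
      (Fintype.card R : 𝕜) • (Fintype.card R : 𝕜) • diagonal (d ∘ (-q⁻¹).mulLeft) := by
    conv_rhs => rw [← permMatrix_mul_diagonal_mul_permMatrix_inv, ← hphase]
    simp only [hmonomial, conjTranspose_smul, conjTranspose_mul, conjTranspose_permMatrix, inv_inv,
      star_natCast, Matrix.smul_mul, Matrix.mul_smul, Matrix.mul_assoc]
  calc
    _ = (Fintype.card R : 𝕜)⁻¹ • (Fintype.card R : 𝕜)⁻¹ • (Vᴴ * diagonal d * V) := by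
      rw [unitaryFourier_mul_mul_conjTranspose]
      simp [hV, Matrix.mul_assoc]
    _ = _ := by rw [hconj, inv_smul_smul₀ hcard, inv_smul_smul₀ hcard]

end Fourier

section Fin

variable {n : ℕ}

theorem of_ite_mod_eq_permMatrix_finRotate {K : Type*} [Zero K] [One K] :
    (of fun j k : Fin n ↦ if (j : ℕ) % n = ((k : ℕ) + 1) % n then (1 : K) else 0) =
      ((finRotate n)⁻¹).permMatrix K := by
  rw [← of_ite_eq_permMatrix_inv]
  ext j k
  simp [Fin.ext_iff, finRotate_apply, Fin.val_add, Nat.mod_eq_of_lt j.isLt]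

variable [NeZero n]

open Fin.CommRing

/-- The additive character `j ↦ ω ^ j` of the integers modulo `n`, modelled by the ring `Fin n`. -/
def powAddChar {K : Type*} [Monoid K] {ω : K} (hω : ω ^ n = 1) : AddChar (Fin n) K where
  toFun j := ω ^ (j : ℕ)
  map_zero_eq_one' := by simp
  map_add_eq_mul' i j := by rw [Fin.val_add, ← pow_eq_pow_mod _ hω, pow_add]

theorem isPrimitive_powAddChar {K : Type*} [CommRing K] {ω : K} (hω : IsPrimitiveRoot ω n) :
    (powAddChar hω.pow_eq_one).IsPrimitive := by
  intro a ha hshift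
  have hpow : ω ^ (a : ℕ) = 1 := by
    simpa [powAddChar] using DFunLike.congr_fun hshift 1
  exact hω.pow_ne_one_of_pos_of_lt (Fin.val_ne_zero_iff.2 ha) a.isLt hpow

theorem fourierMatrix_powAddChar {K : Type*} [CommRing K] {ω : K} (hω : ω ^ n = 1) :
    fourierMatrix (powAddChar hω) = of fun j k : Fin n ↦ ω ^ ((j : ℕ) * (k : ℕ)) := by
  ext j k
  exact (pow_eq_pow_mod _ hω).symm

theorem exists_unit_mul_add_of_modEq {f : Fin n → Fin n} {q m : ℤ} (hq : Int.gcd q n = 1)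
    (hf : ∀ j, ((f j : ℕ) : ℤ) ≡ q * (j : ℕ) + m [ZMOD n]) :
    ∃ (u : (Fin n)ˣ) (b : Fin n), ∀ j, f j = u * j + b := by
  have hunit : IsUnit (q : Fin n) := by
    have hcop := (Int.isCoprime_iff_gcd_eq_one.2 hq).map (Int.castRingHom (Fin n))
    simpa [isCoprime_zero_right] using hcop
  refine ⟨hunit.unit, m, fun j ↦ ?_⟩
  simpa using (CharP.intCast_eq_intCast (Fin n) n).2 (hf j)

theorem exists_unitary_conj_clock_eq_shift {𝕜 : Type*} [RCLike 𝕜] {ω : 𝕜}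
    (hω : IsPrimitiveRoot ω n) (σ : Equiv.Perm (Fin n)) {π : Equiv.Perm (Fin n)} {q m : ℤ}
    (hq : Int.gcd q n = 1) (hπ : ∀ j, ((π j : ℕ) : ℤ) ≡ q * (j : ℕ) + m [ZMOD n]) :
    let F : Matrix (Fin n) (Fin n) 𝕜 := of fun j k ↦ ω ^ ((j : ℕ) * (k : ℕ))
    ∃ (U : Matrix (Fin n) (Fin n) 𝕜) (τ : Equiv.Perm (Fin n)), U * Uᴴ = 1 ∧
      U * diagonal (fun j : Fin n ↦ ω ^ (j : ℕ)) * Uᴴ = ((finRotate n)⁻¹).permMatrix 𝕜 ∧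
      U * ((n : 𝕜)⁻¹ • (π.permMatrix 𝕜 * Fᴴ * diagonal (fun j ↦ ω ^ (σ j : ℕ)) * F *
        (π⁻¹).permMatrix 𝕜)) * Uᴴ = diagonal fun j ↦ ω ^ (τ j : ℕ) := by
  intro F
  obtain ⟨u, b, hub⟩ := exists_unit_mul_add_of_modEq hq hπ
  have hψ := isPrimitive_powAddChar hω
  have hrotate : finRotate n = Equiv.addRight 1 := Equiv.ext finRotate_apply
  refine ⟨unitaryFourier (powAddChar hω.pow_eq_one), σ * (-u⁻¹).mulLeft,
    unitaryFourier_mul_conjTranspose hψ, ?_, ?_⟩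
  · rw [hrotate, ← unitaryFourier_conj_diagonal hψ 1]
    simp only [mul_one]
    rfl
  · have hconj := unitaryFourier_conj_permuted_fourier_conj_diagonal hψ hub fun j ↦ ω ^ (σ j : ℕ)
    rwa [fourierMatrix_powAddChar, Fintype.card_fin] at hconj

end Fin

theorem stmt_9_general (n : ℕ) (hn : 2 ≤ n)
    (ω : ℂ) (hω : IsPrimitiveRoot ω n)
    (A F Bhat : Matrix (Fin n) (Fin n) ℂ)
    (hA : A = Matrix.diagonal (fun j : Fin n => ω ^ (j : ℕ)))
    (hF : F = Matrix.of (fun j k : Fin n => ω ^ ((j : ℕ) * (k : ℕ))))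
    (hBhat : Bhat = Matrix.of fun j k : Fin n =>
      if (j : ℕ) % n = ((k : ℕ) + 1) % n then 1 else 0)
    (P₁ P₂ : Matrix (Fin n) (Fin n) ℂ)
    (hP₁ : IsPermMatrix P₁)
    (π : Equiv.Perm (Fin n))
    (hP₂ : P₂ = Matrix.of fun i j : Fin n => if i = π j then 1 else 0)
    (hπ : ∃ q m : ℤ, Int.gcd q n = 1 ∧
      ∀ j : Fin n, ((π j : ℕ) : ℤ) ≡ q * ((j : ℕ) : ℤ) + m [ZMOD (n : ℤ)])
    (B : Matrix (Fin n) (Fin n) ℂ)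
    (hB : B = ((1 : ℂ) / n) • (P₂ᵀ * Fᴴ * P₁ᵀ * A * P₁ * F * P₂)) :
    ({p : ℂ × ℂ × ℂ |
        (p.1 • A + p.2.1 • B + p.2.2 • (A * B) - 1).det = 0} =
      {p : ℂ × ℂ × ℂ |
        p.1 ^ n + p.2.1 ^ n + (-1 : ℂ) ^ (n - 1) * p.2.2 ^ n = 1}) ∧
    ∃ P U : Matrix (Fin n) (Fin n) ℂ, IsPermMatrix P ∧ U * Uᴴ = 1 ∧
      U * A * Uᴴ = Bhat ∧ U * B * Uᴴ = Pᵀ * A * P := by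
  have : NeZero n := ⟨by omega⟩
  obtain ⟨σ, rfl⟩ := hP₁
  obtain ⟨q, m, hq, hπ⟩ := hπ
  obtain ⟨U, τ, hUU, hUA, hUB⟩ := exists_unitary_conj_clock_eq_shift hω σ hq hπ
  have hB' : B = (n : ℂ)⁻¹ • (π.permMatrix ℂ * Fᴴ * diagonal (fun j ↦ ω ^ (σ j : ℕ)) * F *
      (π⁻¹).permMatrix ℂ) := by
    have hσ := permMatrix_mul_diagonal_mul_permMatrix_inv σ fun j ↦ ω ^ (j : ℕ)
    simp only [Function.comp_def] at hσ
    simp only [hB, hP₂, hA, of_ite_eq_permMatrix_inv, transpose_permMatrix, inv_inv, one_div, ← hσ,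
      Matrix.mul_assoc]
  rw [← hA] at hUA
  rw [← hF, ← hB'] at hUB
  refine ⟨?_, (τ⁻¹).permMatrix ℂ, U, ⟨τ, (of_ite_eq_permMatrix_inv τ).symm⟩, hUU, ?_, ?_⟩
  · ext ⟨x, y, z⟩
    rw [Set.mem_ofPred_eq, Set.mem_ofPred_eq, ← det_pencil_conj hUU, hUA, hUB,
      det_shift_clock_pencil hn hω, mul_eq_zero, or_iff_right (pow_ne_zero _ (by norm_num)),
      sub_eq_zero, eq_comm]
  · rw [hUA, hBhat, of_ite_mod_eq_permMatrix_finRotate]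
  · rw [hUB, hA, transpose_permMatrix, inv_inv, permMatrix_mul_diagonal_mul_permMatrix_inv]
    rfl

theorem stmt_9 (n : ℕ) (hn : 2 ≤ n)
    (ω : ℂ) (hω : ω = Complex.exp (2 * Real.pi * Complex.I / n))
    (A F Bhat : Matrix (Fin n) (Fin n) ℂ)
    (hA : A = Matrix.diagonal (fun j : Fin n => ω ^ (j : ℕ)))
    (hF : F = Matrix.of (fun j k : Fin n => ω ^ ((j : ℕ) * (k : ℕ))))
    (hBhat : Bhat = Matrix.of fun j k : Fin n =>
      if (j : ℕ) % n = ((k : ℕ) + 1) % n then 1 else 0)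
    (P₁ P₂ : Matrix (Fin n) (Fin n) ℂ)
    (hP₁ : IsPermMatrix P₁)
    (π : Equiv.Perm (Fin n))
    (hP₂ : P₂ = Matrix.of fun i j : Fin n => if i = π j then 1 else 0)
    (hπ : ∃ q m : ℤ, Int.gcd q n = 1 ∧
      ∀ j : Fin n, ((π j : ℕ) : ℤ) ≡ q * ((j : ℕ) : ℤ) + m [ZMOD (n : ℤ)])
    (B : Matrix (Fin n) (Fin n) ℂ)
    (hB : B = ((1 : ℂ) / n) • (P₂ᵀ * Fᴴ * P₁ᵀ * A * P₁ * F * P₂)) :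
    ({p : ℂ × ℂ × ℂ |
        (p.1 • A + p.2.1 • B + p.2.2 • (A * B) - 1).det = 0} =
      {p : ℂ × ℂ × ℂ |
        p.1 ^ n + p.2.1 ^ n + (-1 : ℂ) ^ (n - 1) * p.2.2 ^ n = 1}) ∧
    ∃ P U : Matrix (Fin n) (Fin n) ℂ, IsPermMatrix P ∧ U * Uᴴ = 1 ∧
      U * A * Uᴴ = Bhat ∧ U * B * Uᴴ = Pᵀ * A * P := by
  have hprim : IsPrimitiveRoot ω n := hω ▸ Complex.isPrimitiveRoot_exp n (by omega)
  exact stmt_9_general n hn ω hprim A F Bhat hA hF hBhat P₁ P₂ hP₁ π hP₂ hπ B hB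
end
end

section
/- Let n ≥ 2 and let A, B ∈ Mₙ(ℂ) be such that A is normal, the operator norm of B on Euclidean ℂⁿ equals 1, and {(x,y,z) ∈ ℂ³ : det(x·A + y·B + z·AB − I) = 0} = {(x,y,z) ∈ ℂ³ : xⁿ + yⁿ + (−1)^{n−1} zⁿ = 1}. Let P₀ be the orthogonal projection onto ker(A − I) and let T be the reduced resolvent of A at the eigenvalue 1. For m ≥ 1 and a subset S ⊆ {1,…,m}, define C_m(S) = S₁S₂⋯S_m where S_s = ABT if s ∈ S and S_s = BT if s ∉ S for 1 ≤ s ≤ m−1, and S_m = AB if m ∈ S and S_m = B if m ∉ S; and for 0 ≤ k ≤ m set 𝒞(k,m) = Σ_{S ⊆ {1,…,m}, |S| = k} C_m(S). Then P₀·𝒞(k,m)·P₀ = 0 whenever (1 ≤ m ≤ n−1 and 0 ≤ k ≤ m) or (m = n and 1 ≤ k ≤ n−1), and P₀·𝒞(n,n)·P₀ = (1/n)·P₀. -/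
open Matrix Complex

noncomputable section

/-- The `s`-th factor of the product `C_m(S)`: for `s < m - 1` (positions `1,…,m-1`
in one-based indexing) it is `ABT` if `s ∈ S` and `BT` otherwise; the last factor
(position `m`) is `AB` if it belongs to `S` and `B` otherwise. -/
def Cfactor {n : ℕ} (A B T : Matrix (Fin n) (Fin n) ℂ) (m : ℕ)
    (S : Finset (Fin m)) (s : Fin m) : Matrix (Fin n) (Fin n) ℂ :=
  if (s : ℕ) + 1 = m then (if s ∈ S then A * B else B)
  else (if s ∈ S then A * B * T else B * T)

/-- The ordered product `C_m(S) = S₁ S₂ ⋯ S_m`. -/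
def Cm {n : ℕ} (A B T : Matrix (Fin n) (Fin n) ℂ) (m : ℕ)
    (S : Finset (Fin m)) : Matrix (Fin n) (Fin n) ℂ :=
  ((List.finRange m).map (Cfactor A B T m S)).prod

/-- `𝒞(k,m)`: the sum of `C_m(S)` over all subsets `S` of `{1,…,m}` of size `k`. -/
def Ccal {n : ℕ} (A B T : Matrix (Fin n) (Fin n) ℂ) (k m : ℕ) :
    Matrix (Fin n) (Fin n) ℂ :=
  ∑ S ∈ Finset.univ.filter (fun S : Finset (Fin m) => S.card = k), Cm A B T m S

/-!
The points `(x, 0, 0)` and `(0, y, 0)` of the joint spectrum show that `A` and `B` have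
characteristic polynomial `λⁿ - 1`; in particular the eigenvalue `1` of `A` is simple and
`P₀ = u vᵀ`. For fixed `b` put `F = B + b AB`. At `(1, s, s b)` the equation of the hypersurface
reads `sⁿ (1 + (-1)ⁿ⁻¹ bⁿ) = 0`, so `det (A - 1 + s F)` is a multiple of `sⁿ`, with leading
coefficient `det F`. Multiplying `A - 1 + s F` by `T + u vᵀ` and using the matrix determinant lemma
identifies this determinant, up to a unit of `ℂ⟦s⟧`, with `s v (1 + s F T)⁻¹ F u`. Hence all the
moments `v (F T)ʲ F u` with `j < n - 1` vanish and the one with `j = n - 1` is a known multiple of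
`det F · det (T + u vᵀ)`, where `det (T + u vᵀ)` is found by taking `F = 1` instead. Since
`(F T)ᵐ⁻¹ F = ∑ₖ bᵏ 𝒞(k,m)`, comparing powers of `b` gives the result.
-/

section Polynomials

open Polynomial

variable {k : Type*} [Field k] [IsAlgClosed k] {p : k[X]} {n : ℕ}

theorem eq_X_pow_sub_one_of_forall_isRoot (hp : p.Monic) (hdeg : p.natDegree ≤ n)
    (hn : (n : k) ≠ 0) (hroot : ∀ x, x ^ n = 1 → p.IsRoot x) : p = X ^ n - 1 := by
  have hn0 : n ≠ 0 := by rintro rfl; exact hn Nat.cast_zero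
  have hmonic : (X ^ n - 1 : k[X]).Monic := by simpa using monic_X_pow_sub_C (1 : k) hn0
  have hsep : (X ^ n - 1 : k[X]).Separable := by
    simpa using separable_X_pow_sub_C (1 : k) hn one_ne_zero
  have hroots : (X ^ n - 1 : k[X]).roots ≤ p.roots := by
    refine (Multiset.le_iff_subset (nodup_roots hsep)).2 fun x hx => ?_
    rw [mem_roots hp.ne_zero]
    exact hroot x (by simpa [sub_eq_zero] using isRoot_of_mem_roots hx)
  refine eq_of_monic_of_dvd_of_natDegree_le hmonic hp
    ((IsAlgClosed.splits _).dvd_of_roots_le_roots hmonic.ne_zero hroots) ?_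
  simpa using hdeg.trans_eq (natDegree_X_pow_sub_C (r := (1 : k))).symm

theorem eq_C_mul_X_pow_of_forall_isRoot_eq_zero (hroot : ∀ x, p.IsRoot x → x = 0) :
    p = C p.leadingCoeff * X ^ p.natDegree := by
  have hroots : p.roots = Multiset.replicate p.natDegree 0 :=
    Multiset.eq_replicate.2 ⟨(IsAlgClosed.splits p).natDegree_eq_card_roots.symm,
      fun x hx => hroot x (isRoot_of_mem_roots hx)⟩
  conv_lhs => rw [(IsAlgClosed.splits p).eq_prod_roots, hroots]
  simp

end Polynomials

theorem coeff_eq_ite_of_mul_eq_C_mul_X_pow {R : Type*} [CommRing R] {φ ψ : PowerSeries R} {a : R}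
    {N j : ℕ} (hφ : PowerSeries.constantCoeff φ = 1)
    (h : φ * ψ = PowerSeries.C a * PowerSeries.X ^ N) (hj : j ≤ N) :
    PowerSeries.coeff j ψ = if j = N then a else 0 := by
  obtain ⟨χ, hχ⟩ : ∃ χ, χ * φ = 1 :=
    (PowerSeries.isUnit_iff_constantCoeff.2 (hφ ▸ isUnit_one)).exists_left_inv
  have hχ0 : PowerSeries.constantCoeff χ = 1 := by
    simpa [hφ] using congrArg PowerSeries.constantCoeff hχ
  have hψ : ψ = PowerSeries.C a * χ * PowerSeries.X ^ N := by
    rw [← one_mul ψ, ← hχ, mul_assoc, h]; ring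
  rw [hψ, PowerSeries.coeff_mul_X_pow']
  rcases hj.eq_or_lt with rfl | hlt
  · simp [hχ0]
  · simp [hlt.ne, hlt.not_ge]

theorem eq_of_forall_sum_pow_smul_eq {k V : Type*} [Field k] [Infinite k] [AddCommGroup V]
    [Module k V] {m : ℕ} {f g : ℕ → V}
    (h : ∀ b : k, ∑ i ∈ Finset.range m, b ^ i • f i = ∑ i ∈ Finset.range m, b ^ i • g i)
    {i : ℕ} (hi : i < m) : f i = g i := by
  rw [← sub_eq_zero, ← Module.forall_dual_apply_eq_zero_iff k]
  intro φ
  have hpoly : ∑ j ∈ Finset.range m, Polynomial.monomial j (φ (f j - g j)) = 0 := by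
    refine Polynomial.funext fun b => ?_
    have hφ := congrArg φ (h b)
    simp only [map_sum, map_smul, smul_eq_mul] at hφ
    simp [Polynomial.eval_finsetSum, mul_comm _ (b ^ _), hφ]
  simpa [Polynomial.finsetSum_coeff, Polynomial.coeff_monomial, hi] using
    congrArg (Polynomial.coeff · i) hpoly

section Determinants

variable {ι R : Type*} [Fintype ι] [DecidableEq ι] [CommRing R]

theorem vecMulVec_mul_mul_vecMulVec {ι R : Type*} [Fintype ι] [CommRing R] (u v : ι → R)
    (M : Matrix ι ι R) : vecMulVec u v * M * vecMulVec u v = (v ⬝ᵥ M *ᵥ u) • vecMulVec u v := by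
  rw [vecMulVec_mul, vecMulVec_mul_vecMulVec, ← dotProduct_mulVec, vecMulVec_smul]

theorem det_add_vecMulVec {M : Matrix ι ι R} (hM : IsUnit M.det) (u v : ι → R) :
    (M + vecMulVec u v).det = M.det * (1 + v ⬝ᵥ M⁻¹ *ᵥ u) := by
  rw [vecMulVec_eq Unit, det_add_replicateCol_mul_replicateRow hM, det_unique (n := Unit),
    Matrix.add_apply, one_apply_eq, Matrix.mul_assoc, ← replicateCol_mulVec,
    replicateRow_mul_replicateCol_apply]

/-- `T` is the reduced resolvent of `K` at the eigenvalue `0`, the corresponding spectral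
projection being the rank-one matrix `u vᵀ`. -/
structure IsReducedResolvent (K T : Matrix ι ι R) (u v : ι → R) : Prop where
  mul_eq : K * T = 1 - vecMulVec u v
  mulVec_eq_zero : K *ᵥ u = 0
  resolvent_mulVec_eq_zero : T *ᵥ u = 0
  dotProduct_eq_one : v ⬝ᵥ u = 1

namespace IsReducedResolvent

variable {K T : Matrix ι ι R} {u v : ι → R}

theorem map {S : Type*} [CommRing S] (h : IsReducedResolvent K T u v) (f : R →+* S) :
    IsReducedResolvent (K.map f) (T.map f) (f ∘ u) (f ∘ v) where
  mul_eq := by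
    have hP : vecMulVec (f ∘ u) (f ∘ v) = (vecMulVec u v).map f := by
      ext i j; simp [vecMulVec_apply]
    rw [← Matrix.map_mul, h.mul_eq, hP, Matrix.map_sub f (map_sub f),
      Matrix.map_one f f.map_zero f.map_one]
  mulVec_eq_zero := by
    ext i; rw [← RingHom.map_mulVec, h.mulVec_eq_zero]; simp
  resolvent_mulVec_eq_zero := by
    ext i; rw [← RingHom.map_mulVec, h.resolvent_mulVec_eq_zero]; simp
  dotProduct_eq_one := by rw [← RingHom.map_dotProduct, h.dotProduct_eq_one, map_one]

theorem det_add_smul_mul_det (h : IsReducedResolvent K T u v) (F : Matrix ι ι R) (s : R)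
    (hM : IsUnit (1 + s • (F * T)).det) :
    (K + s • F).det * (T + vecMulVec u v).det =
      (1 + s • (F * T)).det * (s * (v ⬝ᵥ (1 + s • (F * T))⁻¹ *ᵥ F *ᵥ u)) := by
  set M := 1 + s • (F * T) with hMdef
  have hMu : M⁻¹ *ᵥ u = u := by
    have : M *ᵥ u = u := by
      simp [hMdef, add_mulVec, smul_mulVec, ← mulVec_mulVec, h.resolvent_mulVec_eq_zero]
    conv_lhs => rw [← this, mulVec_mulVec, nonsing_inv_mul _ hM, one_mulVec]
  -- Multiplying by `T + u vᵀ`, which inverts `K` off its kernel, turns the pencil into a rank-one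
  -- perturbation of `1 + s F T`.
  have hprod : (K + s • F) * (T + vecMulVec u v) = M + vecMulVec (s • F *ᵥ u - u) v := by
    rw [sub_vecMulVec, smul_vecMulVec, ← mul_vecMulVec, Matrix.mul_add, Matrix.add_mul,
      Matrix.add_mul, h.mul_eq, mul_vecMulVec K, h.mulVec_eq_zero, zero_vecMulVec,
      Matrix.smul_mul, Matrix.smul_mul, hMdef]
    abel
  rw [← det_mul, hprod, det_add_vecMulVec hM, mulVec_sub, hMu, mulVec_smul, dotProduct_sub,
    dotProduct_smul, h.dotProduct_eq_one, smul_eq_mul, add_sub_cancel]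

end IsReducedResolvent

end Determinants

section Pencils

open scoped Polynomial PowerSeries

variable {ι R : Type*} [Fintype ι] [DecidableEq ι] [CommRing R]

/-- The determinant `det (K + X F)` of a linear matrix pencil, as a polynomial in the pencil
parameter. The summands come in the order of `Polynomial.natDegree_det_X_add_C_le`. -/
def detPencil (K F : Matrix ι ι R) : R[X] :=
  ((Polynomial.X : R[X]) • F.map Polynomial.C + K.map Polynomial.C).det

theorem eval_detPencil (K F : Matrix ι ι R) (s : R) :
    (detPencil K F).eval s = (K + s • F).det := by
  rw [detPencil, ← Polynomial.coe_evalRingHom, RingHom.map_det]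
  congr 1
  ext i j
  simp [add_comm, -Polynomial.X_mul_C]

theorem coe_detPencil (K F : Matrix ι ι R) :
    (detPencil K F : R⟦X⟧) =
      (K.map PowerSeries.C + (PowerSeries.X : R⟦X⟧) • F.map PowerSeries.C).det := by
  rw [detPencil, ← Polynomial.coeToPowerSeries.ringHom_apply, RingHom.map_det]
  congr 1
  ext1 i j
  simp [add_comm, -Polynomial.X_mul_C]

/-- The Neumann series `(1 + X M)⁻¹ = ∑ (-M)ʲ Xʲ`, as a matrix of formal power series. -/
def neumannSeries (M : Matrix ι ι R) : Matrix ι ι R⟦X⟧ :=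
  .of fun i j => .mk fun n => ((-M) ^ n) i j

theorem coeff_map_C_mul_neumannSeries (M N : Matrix ι ι R) (i j : ι) (n : ℕ) :
    PowerSeries.coeff n ((N.map PowerSeries.C * neumannSeries M) i j) = (N * (-M) ^ n) i j := by
  simp [mul_apply, neumannSeries]

theorem one_add_X_smul_mul_neumannSeries (M : Matrix ι ι R) :
    (1 + (PowerSeries.X : R⟦X⟧) • M.map PowerSeries.C) * neumannSeries M = 1 := by
  ext i j n
  rw [Matrix.add_mul, Matrix.one_mul, Matrix.smul_mul, Matrix.add_apply, Matrix.smul_apply,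
    smul_eq_mul, map_add]
  cases n with
  | zero => obtain rfl | hij := eq_or_ne i j <;> simp [neumannSeries, *]
  | succ n =>
    rw [PowerSeries.coeff_succ_X_mul, coeff_map_C_mul_neumannSeries]
    obtain rfl | hij := eq_or_ne i j <;> simp [neumannSeries, pow_succ', PowerSeries.coeff_one, *]

theorem coeff_dotProduct_neumannSeries_mulVec (M : Matrix ι ι R) (v w : ι → R) (n : ℕ) :
    PowerSeries.coeff n ((PowerSeries.C ∘ v) ⬝ᵥ neumannSeries M *ᵥ (PowerSeries.C ∘ w)) =
      v ⬝ᵥ (-M) ^ n *ᵥ w := by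
  simp [dotProduct, mulVec, neumannSeries]

theorem constantCoeff_det_one_add_X_smul (M : Matrix ι ι R⟦X⟧) :
    PowerSeries.constantCoeff (1 + (PowerSeries.X : R⟦X⟧) • M).det = 1 := by
  have hM : PowerSeries.constantCoeff.mapMatrix (1 + (PowerSeries.X : R⟦X⟧) • M) = 1 := by
    ext i j
    obtain rfl | hij := eq_or_ne i j <;> simp [*]
  rw [RingHom.map_det, hM, det_one]

namespace IsReducedResolvent

variable {K T : Matrix ι ι R} {u v : ι → R}

theorem coe_detPencil_mul_C_det (h : IsReducedResolvent K T u v) (F : Matrix ι ι R) :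
    (detPencil K F : R⟦X⟧) * PowerSeries.C (T + vecMulVec u v).det =
      (1 + (PowerSeries.X : R⟦X⟧) • (F * T).map PowerSeries.C).det *
        (PowerSeries.X * .mk fun j => v ⬝ᵥ (-(F * T)) ^ j *ᵥ F *ᵥ u) := by
  have hinv := one_add_X_smul_mul_neumannSeries (F * T)
  have hdet := (h.map PowerSeries.C).det_add_smul_mul_det (F.map PowerSeries.C) PowerSeries.X
    (by rw [← Matrix.map_mul]; exact isUnit_det_of_right_inverse hinv)
  rw [← Matrix.map_mul, inv_eq_right_inv hinv, ← coe_detPencil] at hdet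
  have hC : (T.map PowerSeries.C + vecMulVec (PowerSeries.C ∘ u) (PowerSeries.C ∘ v)).det =
      PowerSeries.C (T + vecMulVec u v).det := by
    rw [RingHom.map_det]
    congr 1
    ext1 i j
    simp [vecMulVec_apply]
  have hFu : F.map PowerSeries.C *ᵥ (PowerSeries.C ∘ u) = PowerSeries.C ∘ (F *ᵥ u) :=
    funext fun i => (RingHom.map_mulVec _ F u i).symm
  rw [← hC, hdet, hFu]
  congr 2
  ext j
  rw [coeff_dotProduct_neumannSeries_mulVec, PowerSeries.coeff_mk]

theorem coeff_one_detPencil_mul_det (h : IsReducedResolvent K T u v) (F : Matrix ι ι R) :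
    (detPencil K F).coeff 1 * (T + vecMulVec u v).det = v ⬝ᵥ F *ᵥ u := by
  have hcoeff := congrArg (PowerSeries.coeff (0 + 1)) (h.coe_detPencil_mul_C_det F)
  rw [mul_left_comm, PowerSeries.coeff_succ_X_mul, PowerSeries.coeff_mul_C, zero_add,
    Polynomial.coeff_coe] at hcoeff
  simpa [constantCoeff_det_one_add_X_smul] using hcoeff

theorem dotProduct_pow_mulVec_of_detPencil_eq (h : IsReducedResolvent K T u v)
    {F : Matrix ι ι R} {a : R} {N : ℕ}
    (hF : detPencil K F = Polynomial.C a * Polynomial.X ^ (N + 1)) {j : ℕ} (hj : j ≤ N) :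
    v ⬝ᵥ (-(F * T)) ^ j *ᵥ F *ᵥ u = if j = N then a * (T + vecMulVec u v).det else 0 := by
  have hmul := h.coe_detPencil_mul_C_det F
  rw [mul_left_comm, hF] at hmul
  have hcancel : (1 + (PowerSeries.X : R⟦X⟧) • (F * T).map PowerSeries.C).det *
      (.mk fun j => v ⬝ᵥ (-(F * T)) ^ j *ᵥ F *ᵥ u) =
        PowerSeries.C (a * (T + vecMulVec u v).det) * PowerSeries.X ^ N := by
    refine PowerSeries.X_mul_cancel (hmul.symm.trans ?_)
    simp only [Polynomial.coe_mul, Polynomial.coe_C, Polynomial.coe_pow, Polynomial.coe_X, map_mul]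
    ring
  simpa using coeff_eq_ite_of_mul_eq_C_mul_X_pow (constantCoeff_det_one_add_X_smul _) hcancel hj

end IsReducedResolvent

end Pencils

section FermatSpectrum

open scoped Polynomial
open Fintype (card)
open Polynomial (C X)

variable {ι k : Type*} [Fintype ι] [DecidableEq ι] [Field k]

theorem det_smul_one_add_smul_of_charpoly_eq {M : Matrix ι ι k}
    (hM : M.charpoly = X ^ card ι - 1) (hcard : card ι ≠ 0) (x y : k) :
    (x • (1 : Matrix ι ι k) + y • M).det = x ^ card ι - (-y) ^ card ι := by
  rcases eq_or_ne y 0 with rfl | hy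
  · simp [hcard]
  have hfactor : x • (1 : Matrix ι ι k) + y • M = (-y) • (scalar ι (-x / y) - M) := by
    rw [scalar_apply, ← smul_one_eq_diagonal, smul_sub, smul_smul, neg_smul, sub_neg_eq_add,
      neg_mul, mul_div_cancel₀ _ hy, neg_neg]
  have hmul : -y * (-x / y) = x := by field_simp
  rw [hfactor, det_smul, ← eval_charpoly, hM, Polynomial.eval_sub, Polynomial.eval_pow,
    Polynomial.eval_X, Polynomial.eval_one, mul_sub, ← mul_pow, hmul, mul_one]

theorem charpoly_eq_X_pow_sub_one [IsAlgClosed k] (hcard : (card ι : k) ≠ 0) {M : Matrix ι ι k}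
    (h : ∀ x : k, x ^ card ι = 1 → (x • M - 1).det = 0) : M.charpoly = X ^ card ι - 1 := by
  refine eq_X_pow_sub_one_of_forall_isRoot M.charpoly_monic M.charpoly_natDegree_eq_dim.le hcard
    fun x hx => ?_
  have hx0 : x ≠ 0 := by
    rintro rfl
    exact zero_ne_one ((zero_pow (ne_zero_of_map (f := Nat.castRingHom k) hcard)).symm.trans hx)
  have hfactor : scalar ι x - M = (-x) • (x⁻¹ • M - 1) := by
    rw [scalar_apply, ← smul_one_eq_diagonal, smul_sub, smul_smul, neg_mul, mul_inv_cancel₀ hx0,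
      neg_smul, neg_smul, one_smul, sub_neg_eq_add, neg_add_eq_sub]
  rw [Polynomial.IsRoot, eval_charpoly, hfactor, det_smul, h x⁻¹ (by rw [inv_pow, hx, inv_one]),
    mul_zero]

theorem finrank_eigenspace_eq_one_of_separable {V : Type*} [AddCommGroup V] [Module k V]
    [FiniteDimensional k V] {f : Module.End k V} (hf : f.charpoly.Separable) {μ : k}
    (hμ : f.charpoly.IsRoot μ) : Module.finrank k (f.eigenspace μ) = 1 := by
  refine le_antisymm ((LinearMap.finrank_eigenspace_le f μ).trans
    (Polynomial.rootMultiplicity_le_one_of_separable hf μ)) ?_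
  rw [Submodule.one_le_finrank_iff]
  exact (Module.End.hasEigenvalue_iff_isRoot_charpoly f μ).2 hμ

theorem exists_isReducedResolvent {K T P : Matrix ι ι k}
    (hker : Module.finrank k (LinearMap.ker (toLin' K)) = 1) (hKP : K * P = 0) (hTP : T * P = 0)
    (hTK : T * K = 1 - P) (hKT : K * T = 1 - P) :
    ∃ u v, P = vecMulVec u v ∧ IsReducedResolvent K T u v := by
  obtain ⟨⟨u, hKu⟩, hu, hspan⟩ := finrank_eq_one_iff'.1 hker
  replace hu : u ≠ 0 := fun h => hu (Subtype.ext h)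
  replace hKu : K *ᵥ u = 0 := by simpa using hKu
  have hcol (j : ι) : ∃ c : k, c • u = P.col j := by
    have hj : P.col j ∈ LinearMap.ker (toLin' K) := by
      rw [LinearMap.mem_ker, toLin'_apply, ← mulVec_single_one, mulVec_mulVec, hKP, zero_mulVec]
    obtain ⟨c, hc⟩ := hspan ⟨_, hj⟩
    exact ⟨c, congrArg Subtype.val hc⟩
  choose v hv using hcol
  obtain rfl : P = vecMulVec u v := by
    ext i j
    simpa [vecMulVec_apply, mul_comm] using (congrFun (hv j) i).symm
  have hPu : vecMulVec u v *ᵥ u = u := by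
    have h0 : (1 - vecMulVec u v) *ᵥ u = 0 := by rw [← hTK, ← mulVec_mulVec, hKu, mulVec_zero]
    rwa [sub_mulVec, one_mulVec, sub_eq_zero, eq_comm] at h0
  refine ⟨u, v, rfl, hKT, hKu, ?_, ?_⟩
  · rw [← hPu, mulVec_mulVec, hTP, zero_mulVec]
  · obtain ⟨i, hi⟩ := Function.ne_iff.1 hu
    have hPui := congrFun hPu i
    rw [vecMulVec_mulVec] at hPui
    exact mul_right_cancel₀ hi (by simpa [mul_comm] using hPui)

/-- The proper projective joint spectrum of the triple `(A, B, AB)` is the Fermat-type hypersurface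
`xᴺ + yᴺ + (-1)ᴺ⁻¹ zᴺ = 1`, where `N` is the size of the matrices. -/
def HasFermatSpectrum (A B : Matrix ι ι k) : Prop :=
  ∀ x y z : k, (x • A + y • B + z • (A * B) - 1).det = 0 ↔
    x ^ card ι + y ^ card ι + (-1) ^ (card ι - 1) * z ^ card ι = 1

namespace HasFermatSpectrum

variable [IsAlgClosed k] {A B : Matrix ι ι k}

theorem charpoly_left (hcard : (card ι : k) ≠ 0) (h : HasFermatSpectrum A B) :
    A.charpoly = X ^ card ι - 1 := by
  have hcard' : card ι ≠ 0 := ne_zero_of_map (f := Nat.castRingHom k) hcard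
  exact charpoly_eq_X_pow_sub_one hcard fun x hx => by simpa [hcard', hx] using h x 0 0

theorem charpoly_right (hcard : (card ι : k) ≠ 0) (h : HasFermatSpectrum A B) :
    B.charpoly = X ^ card ι - 1 := by
  have hcard' : card ι ≠ 0 := ne_zero_of_map (f := Nat.castRingHom k) hcard
  exact charpoly_eq_X_pow_sub_one hcard fun x hx => by simpa [hcard', hx] using h 0 x 0

theorem det_add_smul_mul (hcard : (card ι : k) ≠ 0) (h : HasFermatSpectrum A B) (b : k) :
    (B + b • (A * B)).det = (-1) ^ (card ι - 1) * (1 + (-1) ^ (card ι - 1) * b ^ card ι) := by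
  have hcard' : card ι ≠ 0 := ne_zero_of_map (f := Nat.castRingHom k) hcard
  have hA := det_smul_one_add_smul_of_charpoly_eq (h.charpoly_left hcard) hcard' 1 b
  have hB := det_smul_one_add_smul_of_charpoly_eq (h.charpoly_right hcard) hcard' 0 1
  rw [one_smul, one_pow] at hA
  rw [zero_smul, one_smul, zero_add, zero_pow hcard'] at hB
  have hfactor : B + b • (A * B) = (1 + b • A) * B := by
    rw [Matrix.add_mul, Matrix.one_mul, Matrix.smul_mul]
  rw [hfactor, det_mul, hA, hB, neg_pow b, ← mul_pow_sub_one hcard' (-1 : k)]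
  ring

theorem detPencil_eq (hcard : (card ι : k) ≠ 0) (h : HasFermatSpectrum A B) (b : k) :
    detPencil (A - 1) (B + b • (A * B)) =
      C ((-1) ^ (card ι - 1) * (1 + (-1) ^ (card ι - 1) * b ^ card ι)) * X ^ card ι := by
  set F := B + b • (A * B)
  set g := 1 + (-1) ^ (card ι - 1) * b ^ card ι
  have hroot (s : k) : (detPencil (A - 1) F).IsRoot s ↔ s ^ card ι * g = 0 := by
    have hs := h 1 s (s * b)
    rw [one_pow, one_smul, mul_smul, add_assoc, ← smul_add, add_sub_right_comm, mul_pow,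
      mul_left_comm, add_assoc, add_eq_left, ← mul_one_add] at hs
    rw [Polynomial.IsRoot, eval_detPencil, hs]
  have hcoeff : (detPencil (A - 1) F).coeff (card ι) = (-1) ^ (card ι - 1) * g :=
    (Polynomial.coeff_det_X_add_C_card _ _).trans (h.det_add_smul_mul hcard b)
  rcases eq_or_ne g 0 with hg | hg
  · rw [hg, mul_zero, Polynomial.C_0, zero_mul]
    exact Polynomial.funext fun s => by simpa using (hroot s).2 (by rw [hg, mul_zero])
  · have hdeg : (detPencil (A - 1) F).natDegree = card ι :=
      Polynomial.natDegree_eq_of_le_of_coeff_ne_zero (Polynomial.natDegree_det_X_add_C_le _ _)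
        (by rw [hcoeff]; exact mul_ne_zero (pow_ne_zero _ (neg_ne_zero.2 one_ne_zero)) hg)
    rw [eq_C_mul_X_pow_of_forall_isRoot_eq_zero fun s hs =>
      eq_zero_of_pow_eq_zero ((mul_eq_zero.1 ((hroot s).1 hs)).resolve_right hg),
      Polynomial.leadingCoeff, hdeg, hcoeff]

theorem finrank_ker_sub_one (hcard : (card ι : k) ≠ 0) (h : HasFermatSpectrum A B) :
    Module.finrank k (LinearMap.ker (toLin' (A - 1))) = 1 := by
  have hker : LinearMap.ker (toLin' (A - 1)) = Module.End.eigenspace (toLin' A) 1 := by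
    rw [Module.End.eigenspace_def, map_sub, toLin'_one, one_smul]; rfl
  have hsep : (X ^ card ι - 1 : k[X]).Separable := by
    simpa using Polynomial.separable_X_pow_sub_C (1 : k) hcard one_ne_zero
  rw [hker]
  refine finrank_eigenspace_eq_one_of_separable ?_ ?_ <;>
    rw [charpoly_toLin', h.charpoly_left hcard]
  · exact hsep
  · simp

end HasFermatSpectrum

theorem IsReducedResolvent.card_mul_det [Infinite k] {A T : Matrix ι ι k} {u v : ι → k}
    (h : IsReducedResolvent (A - 1) T u v) (hA : A.charpoly = X ^ card ι - 1)
    (hcard : card ι ≠ 0) :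
    (-1) ^ (card ι - 1) * (card ι : k) * (T + vecMulVec u v).det = 1 := by
  have hpencil : detPencil (A - 1) 1 = (X + C (-1)) ^ card ι - C ((-1) ^ card ι) := by
    refine Polynomial.funext fun s => ?_
    have hshift : A - 1 + s • 1 = (s - 1) • (1 : Matrix ι ι k) + (1 : k) • A := by
      rw [one_smul, sub_smul, one_smul]; abel
    rw [eval_detPencil, hshift, det_smul_one_add_smul_of_charpoly_eq hA hcard]
    simp [sub_eq_add_neg]
  have hcoeff : (detPencil (A - 1) 1).coeff 1 = (-1) ^ (card ι - 1) * (card ι : k) := by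
    rw [hpencil, Polynomial.coeff_sub, Polynomial.coeff_X_add_C_pow, Polynomial.coeff_C_succ,
      Nat.choose_one_right, sub_zero]
  rw [← hcoeff, h.coeff_one_detPencil_mul_det, one_mulVec, h.dotProduct_eq_one]

theorem HasFermatSpectrum.vecMulVec_mul_pow_mul_vecMulVec [IsAlgClosed k] {A B T : Matrix ι ι k}
    {u v : ι → k} (hcard : (card ι : k) ≠ 0) (h : HasFermatSpectrum A B)
    (hT : IsReducedResolvent (A - 1) T u v) (b : k) {j : ℕ} (hj : j < card ι) :
    vecMulVec u v * (((B + b • (A * B)) * T) ^ j * (B + b • (A * B))) * vecMulVec u v =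
      (if j + 1 = card ι then ((-1) ^ (card ι - 1) + b ^ card ι) / card ι else 0) •
        vecMulVec u v := by
  obtain ⟨N, hN⟩ := Nat.exists_eq_add_one_of_ne_zero
    (ne_zero_of_map (f := Nat.castRingHom k) hcard)
  have hdet := hT.card_mul_det (h.charpoly_left hcard) (hN ▸ N.succ_ne_zero)
  have hmoment := hT.dotProduct_pow_mulVec_of_detPencil_eq
    ((h.detPencil_eq hcard b).trans (by rw [hN])) (j := j) (by omega)
  have hneg : ((B + b • (A * B)) * T) ^ j = (-1 : k) ^ j • (-((B + b • (A * B)) * T)) ^ j := by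
    rw [← smul_pow, neg_one_smul, neg_neg]
  rw [vecMulVec_mul_mul_vecMulVec, ← mulVec_mulVec, hneg, smul_mulVec, dotProduct_smul, hmoment,
    smul_eq_mul]
  congr 1
  rcases eq_or_ne j N with rfl | hjN
  · have hsq : (-1 : k) ^ j * (-1) ^ j = 1 := by rw [← mul_pow, neg_one_mul, neg_neg, one_pow]
    rw [hN, Nat.add_sub_cancel] at hdet
    rw [if_pos rfl, if_pos hN.symm, hN, Nat.add_sub_cancel, eq_div_iff (hN ▸ hcard)]
    linear_combination ((-1 : k) ^ j + ((-1) ^ j * (-1) ^ j) * b ^ (j + 1)) * hdet +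
      b ^ (j + 1) * hsq
  · rw [if_neg hjN, if_neg (by omega), mul_zero]

end FermatSpectrum

section Expansion

theorem prod_ofFn_add_smul {R E : Type*} [CommSemiring R] [Semiring E] [Algebra R E] {m : ℕ}
    (b : R) (x y : Fin m → E) :
    (List.ofFn fun s => y s + b • x s).prod =
      ∑ S : Finset (Fin m), b ^ S.card • (List.ofFn fun s => if s ∈ S then x s else y s).prod := by
  have hsplit (S : Finset (Fin m)) : S.piecewise (fun s => b • x s) y =
      fun s => (if s ∈ S then b else 1) • if s ∈ S then x s else y s := by
    ext s
    by_cases hs : s ∈ S <;> simp [hs]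
  have hadd : (fun s => y s + b • x s) = (fun s => b • x s) + y := funext fun s => add_comm _ _
  rw [← MultilinearMap.mkPiAlgebraFin_apply (R := R), hadd, MultilinearMap.map_add_univ]
  refine Finset.sum_congr rfl fun S _ => ?_
  rw [hsplit, MultilinearMap.map_smul_univ, Finset.prod_ite_mem, Finset.univ_inter,
    Finset.prod_const, MultilinearMap.mkPiAlgebraFin_apply]

variable {n : ℕ} (A B T : Matrix (Fin n) (Fin n) ℂ)

theorem sum_pow_smul_Ccal (b : ℂ) (m : ℕ) :
    ∑ k ∈ Finset.range (m + 1), b ^ k • Ccal A B T k m =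
      ∑ S : Finset (Fin m), b ^ S.card • Cm A B T m S := by
  rw [← Finset.sum_fiberwise_of_maps_to (t := Finset.range (m + 1)) (g := Finset.card)
    fun S _ => Finset.mem_range_succ_iff.2 (card_finset_fin_le S)]
  refine Finset.sum_congr rfl fun k _ => ?_
  rw [Ccal, Finset.smul_sum]
  exact Finset.sum_congr rfl fun S hS => by rw [(Finset.mem_filter.1 hS).2]

theorem pow_mul_eq_sum_pow_smul_Ccal (b : ℂ) (m : ℕ) :
    ((B + b • (A * B)) * T) ^ m * (B + b • (A * B)) =
      ∑ k ∈ Finset.range (m + 2), b ^ k • Ccal A B T k (m + 1) := by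
  have hfactor (S : Finset (Fin (m + 1))) (s : Fin (m + 1)) : Cfactor A B T (m + 1) S s =
      if s ∈ S then Cfactor A B T (m + 1) .univ s else Cfactor A B T (m + 1) ∅ s := by
    by_cases hs : s ∈ S <;> simp [Cfactor, hs]
  have hCm (S : Finset (Fin (m + 1))) : Cm A B T (m + 1) S = (List.ofFn fun s =>
      if s ∈ S then Cfactor A B T (m + 1) .univ s else Cfactor A B T (m + 1) ∅ s).prod := by
    rw [Cm, ← List.ofFn_eq_map, funext (hfactor S)]
  have hinit (i : Fin m) : Cfactor A B T (m + 1) ∅ i.castSucc +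
      b • Cfactor A B T (m + 1) .univ i.castSucc = (B + b • (A * B)) * T := by
    simp [Cfactor, i.2.ne, Matrix.add_mul]
  have hlast : Cfactor A B T (m + 1) ∅ (Fin.last m) +
      b • Cfactor A B T (m + 1) .univ (Fin.last m) = B + b • (A * B) := by
    simp [Cfactor]
  simp only [sum_pow_smul_Ccal A B T b (m + 1), hCm]
  rw [← prod_ofFn_add_smul, List.ofFn_succ', List.concat_eq_append, List.prod_append,
    List.prod_singleton, hlast]
  simp only [hinit, List.ofFn_const, List.prod_replicate]

end Expansion

namespace HasFermatSpectrum

variable {n : ℕ} {A B T : Matrix (Fin n) (Fin n) ℂ} {u v : Fin n → ℂ}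

theorem sum_pow_smul_vecMulVec_mul_Ccal_mul (h : HasFermatSpectrum A B)
    (hT : IsReducedResolvent (A - 1) T u v) {m : ℕ} (hm : m < n) (b : ℂ) :
    ∑ k ∈ Finset.range (m + 2), b ^ k • (vecMulVec u v * Ccal A B T k (m + 1) * vecMulVec u v) =
      (if m + 1 = n then ((-1) ^ (n - 1) + b ^ n) / n else 0) • vecMulVec u v := by
  have hn : (n : ℂ) ≠ 0 := Nat.cast_ne_zero.2 (Nat.ne_zero_of_lt hm)
  have hcompress := h.vecMulVec_mul_pow_mul_vecMulVec (by rwa [Fintype.card_fin]) hT b (j := m)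
    (by rwa [Fintype.card_fin])
  rw [pow_mul_eq_sum_pow_smul_Ccal, Finset.mul_sum, Finset.sum_mul, Fintype.card_fin] at hcompress
  simpa only [Matrix.mul_smul, Matrix.smul_mul] using hcompress

theorem vecMulVec_mul_Ccal_mul_eq_zero (h : HasFermatSpectrum A B)
    (hT : IsReducedResolvent (A - 1) T u v) {m k : ℕ} (hm : m + 1 < n) (hk : k ≤ m + 1) :
    vecMulVec u v * Ccal A B T k (m + 1) * vecMulVec u v = 0 := by
  refine eq_of_forall_sum_pow_smul_eq (k := ℂ)
    (f := fun k => vecMulVec u v * Ccal A B T k (m + 1) * vecMulVec u v)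
    (g := 0) (fun b => ?_) (Nat.lt_succ_of_le hk)
  rw [h.sum_pow_smul_vecMulVec_mul_Ccal_mul hT (Nat.lt_of_succ_lt hm) b, if_neg hm.ne]
  simp

theorem vecMulVec_mul_Ccal_self_mul (hn : n ≠ 0) (h : HasFermatSpectrum A B)
    (hT : IsReducedResolvent (A - 1) T u v) {k : ℕ} (hk : k ≤ n) :
    vecMulVec u v * Ccal A B T k n * vecMulVec u v =
      ((if k = 0 then (-1) ^ (n - 1) else if k = n then 1 else 0) / n : ℂ) • vecMulVec u v := by
  obtain ⟨m, rfl⟩ := Nat.exists_eq_add_one_of_ne_zero hn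
  let c (k : ℕ) : ℂ := (if k = 0 then (-1) ^ m else if k = m + 1 then 1 else 0) / ↑(m + 1)
  refine eq_of_forall_sum_pow_smul_eq (k := ℂ)
    (f := fun k => vecMulVec u v * Ccal A B T k (m + 1) * vecMulVec u v)
    (g := fun k => c k • vecMulVec u v) (fun b => ?_) (Nat.lt_succ_of_le hk)
  have hinner : ∑ k ∈ Finset.range m, b ^ (k + 1) * c (k + 1) = 0 :=
    Finset.sum_eq_zero fun k hk => by simp [c, (Finset.mem_range.1 hk).ne]
  have hsum : ∑ k ∈ Finset.range (m + 2), b ^ k * c k =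
      ((-1) ^ m + b ^ (m + 1)) / ↑(m + 1) := by
    rw [Finset.sum_range_succ', Finset.sum_range_succ, hinner]
    simp [c, add_mul, add_comm, div_eq_mul_inv]
  rw [h.sum_pow_smul_vecMulVec_mul_Ccal_mul hT m.lt_succ_self b, if_pos rfl, Nat.add_sub_cancel,
    ← hsum, Finset.sum_smul]
  simp only [smul_smul]

end HasFermatSpectrum

theorem stmt_12_general (n : ℕ) (hn : n ≠ 0)
    (A B : Matrix (Fin n) (Fin n) ℂ)
    (hspec : {p : ℂ × ℂ × ℂ |
        (p.1 • A + p.2.1 • B + p.2.2 • (A * B) - 1).det = 0} =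
      {p : ℂ × ℂ × ℂ |
        p.1 ^ n + p.2.1 ^ n + (-1 : ℂ) ^ (n - 1) * p.2.2 ^ n = 1})
    (P₀ : Matrix (Fin n) (Fin n) ℂ) (hP₀range : (A - 1) * P₀ = 0)
    (T : Matrix (Fin n) (Fin n) ℂ) (hTP₀ : T * P₀ = 0)
    (hT₁ : T * (A - 1) = 1 - P₀) (hT₂ : (A - 1) * T = 1 - P₀) :
    (∀ m k : ℕ,
      ((1 ≤ m ∧ m ≤ n - 1 ∧ k ≤ m) ∨ (m = n ∧ 1 ≤ k ∧ k ≤ n - 1)) →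
        P₀ * Ccal A B T k m * P₀ = 0) ∧
    P₀ * Ccal A B T n n * P₀ = ((1 : ℂ) / n) • P₀ := by
  have h : HasFermatSpectrum A B := fun x y z => by
    simpa using Set.ext_iff.1 hspec (x, y, z)
  have hn' : (Fintype.card (Fin n) : ℂ) ≠ 0 := by simpa using hn
  obtain ⟨u, v, rfl, hT⟩ :=
    exists_isReducedResolvent (h.finrank_ker_sub_one hn') hP₀range hTP₀ hT₁ hT₂
  refine ⟨?_, by simpa [hn] using h.vecMulVec_mul_Ccal_self_mul hn hT le_rfl⟩
  rintro m k (⟨hm, hmn, hk⟩ | ⟨rfl, hk, hkm⟩)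
  · obtain ⟨m, rfl⟩ := Nat.exists_eq_add_of_le' hm
    exact h.vecMulVec_mul_Ccal_mul_eq_zero hT (by omega) hk
  · rw [h.vecMulVec_mul_Ccal_self_mul hn hT (by omega), if_neg (by omega), if_neg (by omega),
      zero_div, zero_smul]

theorem stmt_12 (n : ℕ) (hn : 2 ≤ n)
    (A B : Matrix (Fin n) (Fin n) ℂ)
    (hA : A * Aᴴ = Aᴴ * A)
    (hB : ‖Matrix.toEuclideanCLM (𝕜 := ℂ) B‖ = 1)
    (hspec : {p : ℂ × ℂ × ℂ |
        (p.1 • A + p.2.1 • B + p.2.2 • (A * B) - 1).det = 0} =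
      {p : ℂ × ℂ × ℂ |
        p.1 ^ n + p.2.1 ^ n + (-1 : ℂ) ^ (n - 1) * p.2.2 ^ n = 1})
    -- `P₀` is the orthogonal projection onto `ker (A - 1)`
    (P₀ : Matrix (Fin n) (Fin n) ℂ)
    (hP₀herm : P₀ᴴ = P₀) (hP₀idem : P₀ * P₀ = P₀)
    (hP₀range : (A - 1) * P₀ = 0)
    (hP₀ker : ∀ v : Fin n → ℂ, (A - 1).mulVec v = 0 → P₀.mulVec v = v)
    -- `T` is the reduced resolvent of `A` at the eigenvalue `1`
    (T : Matrix (Fin n) (Fin n) ℂ)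
    (hTP₀ : T * P₀ = 0) (hP₀T : P₀ * T = 0)
    (hT₁ : T * (A - 1) = 1 - P₀) (hT₂ : (A - 1) * T = 1 - P₀) :
    (∀ m k : ℕ,
      ((1 ≤ m ∧ m ≤ n - 1 ∧ k ≤ m) ∨ (m = n ∧ 1 ≤ k ∧ k ≤ n - 1)) →
        P₀ * Ccal A B T k m * P₀ = 0) ∧
    P₀ * Ccal A B T n n * P₀ = ((1 : ℂ) / n) • P₀ := by
  exact stmt_12_general n (by omega) A B hspec P₀ hP₀range T hTP₀ hT₁ hT₂
end
end

section
/- Let n ≥ 2 and let A, B ∈ Mₙ(ℂ) be such that A is normal, the operator norm of B on Euclidean ℂⁿ equals 1, and {(x,y,z) ∈ ℂ³ : det(x·A + y·B + z·AB − I) = 0} = {(x,y,z) ∈ ℂ³ : xⁿ + yⁿ + (−1)^{n−1} zⁿ = 1}. Let P₀ be the orthogonal projection onto ker(A − I). Then P₀BᵏP₀ = 0 for k = 1,…,n−1, and P₀BⁿP₀ = P₀. -/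
open Matrix Complex

noncomputable section

/-!
For a scalar `z` put `C = 1 - (1 - A⁻¹) * (1 - z • B)`. The pencil at the point `(x, z, -z)` equals
`A * (x • 1 - C)`, and that point lies on the surface whenever `x ^ n = 1`, so `A⁻¹`, `B` and `C`
all have characteristic polynomial `X ^ n - 1`. A matrix `M` with that characteristic polynomial
satisfies `adj (1 - M) = ∑ k < n, M ^ k`. Since adjugates reverse products,
`∑ k < n, C ^ k = (∑ k < n, (z • B) ^ k) * (n • P)`, where `n • P = ∑ k < n, A⁻¹ ^ k`. Now
`P * A⁻¹ = P` gives `P * C = P`, so multiplying by `P` on the left yields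
`P * (∑ k < n, (z • B) ^ k) * P = P` for every `z`, and one compares coefficients of `z ^ k`.
For normal `A` the spectral projection `P` is the orthogonal one.
-/

section GeomSum

lemma mul_geom_sum_of_mul_eq_self {S : Type*} [Semiring S] {p a : S} (h : p * a = p) (n : ℕ) :
    p * ∑ k ∈ Finset.range n, a ^ k = n • p := by
  have hpow (k : ℕ) : p * a ^ k = p := by
    induction k with
    | zero => rw [pow_zero, mul_one]
    | succ k ih => rw [pow_succ, ← mul_assoc, ih, h]
  simp only [Finset.mul_sum, hpow, Finset.sum_const, Finset.card_range]

lemma mul_geom_sum_of_pow_eq_one {S : Type*} [Ring S] {a : S} {n : ℕ} (h : a ^ n = 1) :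
    a * ∑ k ∈ Finset.range n, a ^ k = ∑ k ∈ Finset.range n, a ^ k := by
  have hsub := mul_neg_geom_sum a n
  rwa [h, sub_self, sub_mul, one_mul, sub_eq_zero, eq_comm] at hsub

end GeomSum

section RootsOfUnity

open Polynomial

variable {R : Type*} [CommRing R] [IsDomain R] {ζ : R} {n : ℕ}

lemma eq_zero_of_sum_pow_mul_eq_const (hζ : IsPrimitiveRoot ζ n) {c : ℕ → R} {a : R}
    (h : ∀ z : R, ∑ k ∈ Finset.range n, z ^ k * c k = a) {k : ℕ} (hk : 0 < k) (hkn : k < n) :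
    c k = 0 := by
  have hn : 0 < n := hk.trans hkn
  have hconst : ∑ k ∈ Finset.range n, C (c k) * X ^ k = C a := by
    refine eq_of_degrees_lt_of_eval_finset_eq (nthRootsFinset n (1 : R)) ?_ ?_ fun z _ => ?_
    · rw [hζ.card_nthRootsFinset]
      simp only [← Fin.sum_univ_eq_sum_range fun k => C (c k) * X ^ k]
      exact degree_sum_fin_lt _
    · rw [hζ.card_nthRootsFinset]
      exact degree_C_le.trans_lt (by exact_mod_cast hn)
    · simp only [eval_finsetSum, eval_mul, eval_C, eval_pow, eval_X, mul_comm (c _), h z]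
  have hcoeff := congrArg (coeff · k) hconst
  simpa [coeff_C_mul, coeff_X_pow, coeff_C, hkn, hk.ne'] using hcoeff

lemma matrix_eq_zero_of_sum_pow_smul_eq_const {l m : Type*} (hζ : IsPrimitiveRoot ζ n)
    {c : ℕ → Matrix l m R} {a : Matrix l m R}
    (h : ∀ z : R, ∑ k ∈ Finset.range n, z ^ k • c k = a) {k : ℕ} (hk : 0 < k) (hkn : k < n) :
    c k = 0 := by
  ext i j
  refine eq_zero_of_sum_pow_mul_eq_const hζ (c := (c · i j)) (a := a i j) (fun z => ?_) hk hkn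
  simpa only [Matrix.sum_apply, Matrix.smul_apply, smul_eq_mul] using congrFun₂ (h z) i j

end RootsOfUnity

section Charpoly

open Polynomial

variable {R ι : Type*} [CommRing R] [Fintype ι] [DecidableEq ι] {n : ℕ} {M : Matrix ι ι R}

lemma pow_eq_one_of_charpoly_eq (hM : M.charpoly = X ^ n - 1) : M ^ n = 1 := by
  simpa [hM, sub_eq_zero] using M.aeval_self_charpoly

lemma charpolyRev_eq_one_sub_X_pow (hM : M.charpoly = X ^ n - 1) :
    M.charpolyRev = 1 - X ^ n := by
  nontriviality R
  have hdeg : (X ^ n - 1 : R[X]).natDegree = n := natDegree_X_pow_sub_C (r := 1)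
  rw [← reverse_charpoly, hM, reverse, hdeg, reflect_sub, reflect_one, reflect_monomial,
    revAt_le le_rfl, Nat.sub_self, pow_zero]

/- The identity is first proved for an indeterminate scalar, where `det (1 - X • M) = 1 - X ^ n` can
be cancelled. -/
lemma adjugate_one_sub_smul_eq_geom_sum (hM : M.charpoly = X ^ n - 1) (z : R) :
    (1 - z • M).adjugate = ∑ k ∈ Finset.range n, (z • M) ^ k := by
  set N : Matrix ι ι R[X] := (X : R[X]) • M.map C with hN
  have hNpow : N ^ n = (X ^ n : R[X]) • 1 := by
    rw [hN, _root_.smul_pow, ← C.mapMatrix_apply, ← map_pow, pow_eq_one_of_charpoly_eq hM, map_one]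
  have hdet : (1 - N).det = 1 - X ^ n := charpolyRev_eq_one_sub_X_pow hM
  have hreg : IsLeftRegular (X ^ n - 1 : R[X]) := by
    have hmonic : (X ^ n - 1 : R[X]).Monic := hM ▸ M.charpoly_monic
    exact hmonic.isRegular.left
  have hgeneric : (1 - N).adjugate = ∑ k ∈ Finset.range n, N ^ k := by
    refine hreg.matrix ?_
    calc (X ^ n - 1 : R[X]) • (1 - N).adjugate
        = (1 - N).adjugate * ((N - 1) * ∑ k ∈ Finset.range n, N ^ k) := by
          rw [mul_geom_sum, hNpow, mul_sub, mul_smul_comm, mul_one, sub_smul, one_smul]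
      _ = (X ^ n - 1 : R[X]) • ∑ k ∈ Finset.range n, N ^ k := by
          rw [← mul_assoc, ← neg_sub 1 N, mul_neg, adjugate_mul, hdet, ← neg_smul, neg_sub,
            smul_one_mul]
  have hmap : (evalRingHom z).mapMatrix N = z • M := by
    ext i j
    simpa [hN] using mul_comm (M i j) z
  simpa only [RingHom.map_adjugate, map_sub, map_one, map_sum, map_pow, hmap] using
    congrArg (evalRingHom z).mapMatrix hgeneric

lemma adjugate_one_sub_eq_geom_sum (hM : M.charpoly = X ^ n - 1) :
    (1 - M).adjugate = ∑ k ∈ Finset.range n, M ^ k := by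
  simpa only [one_smul] using adjugate_one_sub_smul_eq_geom_sum hM 1

variable [IsDomain R] {ζ : R}

lemma charpoly_eq_X_pow_sub_one_of_det_smul_one_sub (hζ : IsPrimitiveRoot ζ n) (hn : 0 < n)
    (hι : Fintype.card ι = n) (h : ∀ x : R, x ^ n = 1 → (x • 1 - M).det = 0) :
    M.charpoly = X ^ n - 1 := by
  have hmonic : (X ^ n - 1 : R[X]).Monic := monic_X_pow_sub_C 1 hn.ne'
  have hdeg : M.charpoly.degree = n := by rw [charpoly_degree_eq_dim, hι]
  refine eq_of_degree_le_of_eval_finset_eq (nthRootsFinset n (1 : R)) ?_ ?_ ?_ fun x hx => ?_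
  · rw [hdeg, hζ.card_nthRootsFinset]
  · rw [hdeg]
    exact (degree_X_pow_sub_C hn 1).symm
  · rw [M.charpoly_monic.leadingCoeff, hmonic.leadingCoeff]
  · have hx : x ^ n = 1 := (mem_nthRootsFinset hn 1).1 hx
    rw [eval_charpoly, scalar_apply, ← smul_one_eq_diagonal, h x hx]
    simp [hx]

lemma charpoly_eq_X_pow_sub_one_of_det_smul_sub_one (hζ : IsPrimitiveRoot ζ n)
    (hn : 0 < n) (hι : Fintype.card ι = n) (h : ∀ x : R, x ^ n = 1 → (x • M - 1).det = 0) :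
    M.charpoly = X ^ n - 1 := by
  refine charpoly_eq_X_pow_sub_one_of_det_smul_one_sub hζ hn hι fun x hx => ?_
  have hinv : x * x ^ (n - 1) = 1 := by rw [mul_pow_sub_one hn.ne', hx]
  have hfactor : x • 1 - M = (-x) • (x ^ (n - 1) • M - 1) := by
    rw [smul_sub, smul_smul, neg_mul, hinv, neg_one_smul, neg_smul]
    abel
  rw [hfactor, det_smul, h _ (by rw [← pow_mul, mul_comm, pow_mul, hx, one_pow]), mul_zero]

end Charpoly

section Projection

open Polynomial

variable {R ι : Type*} [CommRing R] [Fintype ι] {n : ℕ} {M B P : Matrix ι ι R}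

lemma mul_eq_self_of_forall_mulVec_eq_self (hP : ∀ v : ι → R, M *ᵥ v = v → P *ᵥ v = v)
    {T : Matrix ι ι R} (hT : M * T = T) : P * T = T :=
  ext_col fun j => hP (T.col j) (congrArg (col · j) hT)

variable [DecidableEq ι]

lemma geom_sum_eq_nsmul_of_mul_eq_self (hM : M ^ n = 1) (hPM : P * M = P)
    (hP : ∀ v : ι → R, M *ᵥ v = v → P *ᵥ v = v) :
    ∑ k ∈ Finset.range n, M ^ k = n • P := by
  rw [← mul_geom_sum_of_mul_eq_self hPM,
    mul_eq_self_of_forall_mulVec_eq_self hP (mul_geom_sum_of_pow_eq_one hM)]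

lemma mul_geom_sum_smul_mul_eq_self [IsDomain R] [NeZero (n : R)] (hM : M.charpoly = X ^ n - 1)
    (hB : B.charpoly = X ^ n - 1) (z : R)
    (hMB : (1 - (1 - M) * (1 - z • B)).charpoly = X ^ n - 1) (hPM : P * M = P)
    (hP : ∀ v : ι → R, M *ᵥ v = v → P *ᵥ v = v) :
    P * (∑ k ∈ Finset.range n, (z • B) ^ k) * P = P := by
  have hPMB : P * (1 - (1 - M) * (1 - z • B)) = P := by
    have hzero : P * (1 - M) = 0 := by rw [mul_sub, mul_one, hPM, sub_self]
    rw [mul_sub, mul_one, ← mul_assoc, hzero, zero_mul, sub_zero]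
  have hn : (n : R) • (P * (∑ k ∈ Finset.range n, (z • B) ^ k) * P) = (n : R) • P := by
    simp only [Nat.cast_smul_eq_nsmul]
    calc n • (P * (∑ k ∈ Finset.range n, (z • B) ^ k) * P)
        = P * ((1 - z • B).adjugate * (1 - M).adjugate) := by
          rw [adjugate_one_sub_smul_eq_geom_sum hB, adjugate_one_sub_eq_geom_sum hM,
            geom_sum_eq_nsmul_of_mul_eq_self (pow_eq_one_of_charpoly_eq hM) hPM hP,
            mul_smul_comm, mul_smul_comm, mul_assoc]
      _ = P * (1 - (1 - (1 - M) * (1 - z • B))).adjugate := by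
          rw [← adjugate_mul_distrib, sub_sub_cancel]
      _ = n • P := by rw [adjugate_one_sub_eq_geom_sum hMB, mul_geom_sum_of_mul_eq_self hPMB]
  exact smul_right_injective _ (NeZero.ne (n : R)) hn

end Projection

section Pencil

open Polynomial

variable {R ι : Type*} [CommRing R] [IsDomain R] [Fintype ι] [DecidableEq ι] {n : ℕ} {ζ : R}
  {A B P : Matrix ι ι R}

lemma charpoly_one_sub_mul_eq_X_pow_sub_one (hζ : IsPrimitiveRoot ζ n) (hn : 0 < n)
    (hι : Fintype.card ι = n) (hA : IsUnit A.det) (z : R)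
    (h : ∀ x : R, x ^ n = 1 → (x • A + z • B + (-z) • (A * B) - 1).det = 0) :
    (1 - (1 - A⁻¹) * (1 - z • B)).charpoly = X ^ n - 1 := by
  refine charpoly_eq_X_pow_sub_one_of_det_smul_one_sub hζ hn hι fun x hx => ?_
  have hfactor : x • 1 - (1 - (1 - A⁻¹) * (1 - z • B)) =
      A⁻¹ * (x • A + z • B + (-z) • (A * B) - 1) := by
    simp only [mul_sub, mul_add, sub_mul, mul_smul_comm, ← mul_assoc, nonsing_inv_mul A hA, one_mul,
      mul_one, neg_smul, mul_neg, smul_sub]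
    abel
  rw [hfactor, det_mul, h x hx, mul_zero]

theorem stmt_13_general (hζ : IsPrimitiveRoot ζ n) (hn : 0 < n) (hι : Fintype.card ι = n)
    (hspec : ∀ x y z : R, x ^ n + y ^ n + (-1) ^ (n - 1) * z ^ n = 1 →
      (x • A + y • B + z • (A * B) - 1).det = 0)
    (hAP : A * P = P) (hPA : P * A = P) (hP : ∀ v : ι → R, A *ᵥ v = v → P *ᵥ v = v) :
    (∀ k : ℕ, 0 < k → k < n → P * B ^ k * P = 0) ∧ P * B ^ n * P = P := by
  have : NeZero n := ⟨hn.ne'⟩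
  have : NeZero (n : R) := hζ.neZero'
  have hA : A.charpoly = X ^ n - 1 := charpoly_eq_X_pow_sub_one_of_det_smul_sub_one hζ hn hι
    fun x hx => by simpa using hspec x 0 0 (by simp [hx, hn.ne'])
  have hB : B.charpoly = X ^ n - 1 := charpoly_eq_X_pow_sub_one_of_det_smul_sub_one hζ hn hι
    fun y hy => by simpa using hspec 0 y 0 (by simp [hy, hn.ne'])
  have hAdet : IsUnit A.det :=
    (isUnit_iff_isUnit_det A).1 (.of_pow_eq_one (pow_eq_one_of_charpoly_eq hA) hn.ne')
  have hpencil (z : R) : (1 - (1 - A⁻¹) * (1 - z • B)).charpoly = X ^ n - 1 :=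
    charpoly_one_sub_mul_eq_X_pow_sub_one hζ hn hι hAdet z fun x hx => hspec x z (-z) <| by
      rw [hx, neg_pow z, ← mul_assoc, ← pow_add, Odd.neg_one_pow ⟨n - 1, by omega⟩]
      ring
  have hAinv : A⁻¹.charpoly = X ^ n - 1 := by simpa using hpencil 0
  have hPAinv : P * A⁻¹ = P := by
    conv_lhs => rw [← hPA, mul_assoc, mul_nonsing_inv A hAdet, mul_one]
  have hPinv (v : ι → R) (hv : A⁻¹ *ᵥ v = v) : P *ᵥ v = v := hP v <| by
    rw [← hv, mulVec_mulVec, mul_nonsing_inv A hAdet, one_mulVec, hv]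
  have hcompress (z : R) : ∑ k ∈ Finset.range n, z ^ k • (P * B ^ k * P) = P := by
    simpa only [_root_.smul_pow, Finset.mul_sum, Finset.sum_mul, mul_smul_comm,
      smul_mul_assoc] using mul_geom_sum_smul_mul_eq_self hAinv hB z (hpencil z) hPAinv hPinv
  refine ⟨fun k => matrix_eq_zero_of_sum_pow_smul_eq_const hζ hcompress, ?_⟩
  rw [pow_eq_one_of_charpoly_eq hB, mul_one, mul_eq_self_of_forall_mulVec_eq_self hP hAP]

end Pencil

section Normal

variable {R ι : Type*} [Ring R] [PartialOrder R] [StarRing R] [StarOrderedRing R] [NoZeroDivisors R]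
  [Fintype ι]

lemma conjTranspose_mul_eq_zero_iff_of_isStarNormal {m : Type*} (N : Matrix ι ι R)
    [hN : IsStarNormal N] (P : Matrix ι m R) : Nᴴ * P = 0 ↔ N * P = 0 := by
  have hcomm : N * Nᴴ = Nᴴ * N := hN.star_comm_self.eq.symm
  rw [← self_mul_conjTranspose_mul_eq_zero, hcomm, conjTranspose_mul_self_mul_eq_zero]

lemma mul_eq_self_of_isStarNormal {A P : Matrix ι ι R} [IsStarNormal A] (hP : P.IsHermitian)
    (hAP : A * P = P) : P * A = P := by
  classical
  have hzero : (1 - A)ᴴ * P = 0 := (conjTranspose_mul_eq_zero_iff_of_isStarNormal _ P).2 <| by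
    rw [sub_mul, one_mul, hAP, sub_self]
  have hzero' : P * (1 - A) = 0 := by
    simpa only [conjTranspose_mul, conjTranspose_conjTranspose, hP.eq, conjTranspose_zero] using
      congrArg conjTranspose hzero
  rwa [mul_sub, mul_one, sub_eq_zero, eq_comm] at hzero'

end Normal

theorem stmt_13 (n : ℕ) (hn : 2 ≤ n)
    (A B : Matrix (Fin n) (Fin n) ℂ)
    (hA : A * Aᴴ = Aᴴ * A)
    (hB : ‖Matrix.toEuclideanCLM (𝕜 := ℂ) B‖ = 1)
    (hspec : {p : ℂ × ℂ × ℂ |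
        (p.1 • A + p.2.1 • B + p.2.2 • (A * B) - 1).det = 0} =
      {p : ℂ × ℂ × ℂ |
        p.1 ^ n + p.2.1 ^ n + (-1 : ℂ) ^ (n - 1) * p.2.2 ^ n = 1})
    -- `P₀` is the orthogonal projection onto `ker (A - 1)`
    (P₀ : Matrix (Fin n) (Fin n) ℂ)
    (hP₀herm : P₀ᴴ = P₀) (hP₀idem : P₀ * P₀ = P₀)
    (hP₀range : (A - 1) * P₀ = 0)
    (hP₀ker : ∀ v : Fin n → ℂ, (A - 1).mulVec v = 0 → P₀.mulVec v = v) :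
    (∀ k : ℕ, 1 ≤ k → k ≤ n - 1 → P₀ * B ^ k * P₀ = 0) ∧
    P₀ * B ^ n * P₀ = P₀ := by
  have hAP : A * P₀ = P₀ := by rwa [sub_mul, one_mul, sub_eq_zero] at hP₀range
  have : IsStarNormal A := ⟨hA.symm⟩
  have hP₀A : P₀ * A = P₀ :=
    open scoped ComplexOrder in mul_eq_self_of_isStarNormal hP₀herm hAP
  have hfix (v : Fin n → ℂ) (hv : A *ᵥ v = v) : P₀ *ᵥ v = v :=
    hP₀ker v (by rw [sub_mulVec, one_mulVec, hv, sub_self])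
  obtain ⟨hvanish, hfixed⟩ := stmt_13_general (Complex.isPrimitiveRoot_exp n (by omega)) (by omega)
    (Fintype.card_fin n) (fun x y z h => (Set.ext_iff.1 hspec (x, y, z)).2 h) hAP hP₀A hfix
  exact ⟨fun k hk hkn => hvanish k hk (by omega), hfixed⟩
end
end

section
/- Let n ≥ 2, ω = exp(2πi/n), and let A, B ∈ Mₙ(ℂ) be such that A is normal, the operator norm of B on Euclidean ℂⁿ equals 1, and {(x,y,z₁,z₂) ∈ ℂ⁴ : det(x·A + y·B + z₁·AB + z₂·BA − I) = 0} = {(x,y,z₁,z₂) ∈ ℂ⁴ : xⁿ + yⁿ + (−1)^{n−1}(ω z₁ + z₂)ⁿ = 1}. Let P₀ be the orthogonal projection onto ker(A − I). Then P₀BʳABP₀ = 0 for r = 1,…,n−2, and P₀B^{n−1}ABP₀ = ω·P₀. -/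
open Matrix Complex

noncomputable section

/-!
Scaling the spectral parameters turns the equation of the joint spectrum into the characteristic
polynomials `tⁿ - c` of all the matrices `x A + y B + z AB + w BA`. Since
`1 - A - yB + z AB + y BA = (1 - yB)(1 - A) + z AB`, this yields
`det ((1 - yB)(1 - A) + z AB) = (y + ω z)ⁿ - yⁿ`. Its `z`-derivative at `0` is, by Jacobi's formula,
`∑ k < n, yᵏ tr (adj (1 - A) Bᵏ A B) = n ω yⁿ⁻¹`, because `adj (1 - yB) = ∑ k < n, yᵏ Bᵏ`.
Comparing coefficients of `yᵏ` gives every trace `tr (adj (1 - A) Bᵏ A B)`.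

As `A` is normal, `P₀ A = P₀`, hence `adj (1 - A) = ∑ k < n, Aᵏ = n P₀`. The eigenvalue `1` of `A`
is a simple root of `tⁿ - 1`, so `P₀` has rank one and `P₀ Z P₀ = tr (P₀ Z) P₀` for every `Z`.
-/

section Polynomial

open Polynomial

variable {K : Type*} [Field K] [IsAlgClosed K] {p : K[X]}

lemma eq_X_pow_of_forall_isRoot_eq_zero (hp : p.Monic) (h : ∀ t, p.IsRoot t → t = 0) :
    p = X ^ p.natDegree := by
  have hsplits := IsAlgClosed.splits p
  have hroots : p.roots = Multiset.replicate p.natDegree 0 :=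
    Multiset.eq_replicate.2
      ⟨hsplits.natDegree_eq_card_roots.symm, fun t ht => h t (isRoot_of_mem_roots ht)⟩
  conv_lhs => rw [hsplits.eq_prod_roots_of_monic hp, hroots]
  simp

lemma eq_X_pow_sub_C_of_isRoot_iff {c : K} (hp : p.Monic) (hn : (p.natDegree : K) ≠ 0)
    (h : ∀ t, t ≠ 0 → (p.IsRoot t ↔ t ^ p.natDegree = c)) : p = X ^ p.natDegree - C c := by
  have hn' : p.natDegree ≠ 0 := ne_zero_of_map (f := Nat.castRingHom K) hn
  rcases eq_or_ne c 0 with rfl | hc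
  · rw [C_0, sub_zero]
    refine eq_X_pow_of_forall_isRoot_eq_zero hp fun t ht => ?_
    by_contra h0
    exact pow_ne_zero _ h0 ((h t h0).1 ht)
  · have hq : (X ^ p.natDegree - C c).Monic := monic_X_pow_sub_C c hn'
    refine eq_of_monic_of_dvd_of_natDegree_le hq hp ?_ natDegree_X_pow_sub_C.ge
    refine (IsAlgClosed.splits _).dvd_of_roots_le_roots hq.ne_zero ?_
    rw [Multiset.le_iff_subset (nodup_roots (separable_X_pow_sub_C c hn hc))]
    intro t ht
    have htc : t ^ p.natDegree = c := by
      simpa [sub_eq_zero] using isRoot_of_mem_roots ht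
    have ht0 : t ≠ 0 := fun h0 => hc (by rw [← htc, h0, zero_pow hn'])
    exact (mem_roots hp.ne_zero).2 ((h t ht0).2 htc)

end Polynomial

section Matrix

open Polynomial

variable {ι R K : Type*} [Fintype ι] [DecidableEq ι] [CommRing R] [Field K]

lemma sum_det_updateRow_eq_trace (M N : Matrix ι ι R) :
    ∑ i, (M.updateRow i (N i)).det = (M.adjugate * N).trace := by
  rw [trace_mul_comm]
  refine Finset.sum_congr rfl fun i _ => ?_
  rw [← cramer_transpose_apply, cramer_eq_adjugate_mulVec, ← adjugate_transpose, mulVec_transpose]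
  rfl

lemma pow_card_dvd_det_piecewise_smul (M N : Matrix ι ι R) (z : R) (s : Finset ι) :
    z ^ s.card ∣ det (of (s.piecewise (z • N) M)) := by
  have hscale : of (s.piecewise (z • N) M) =
      diagonal (s.piecewise (fun _ => z) 1) * of (s.piecewise N M) := by
    ext i j
    by_cases hi : i ∈ s <;> simp [Finset.piecewise, hi]
  rw [hscale, det_mul, det_diagonal]
  simp [Finset.prod_piecewise]

-- Jacobi's formula for the derivative of the determinant at `M` in the direction `N`.
lemma sq_dvd_det_add_smul_sub (M N : Matrix ι ι R) (z : R) :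
    z ^ 2 ∣ (M + z • N).det - (M.det + z * (M.adjugate * N).trace) := by
  let D := (detRowAlternating : (ι → R) [⋀^ι]→ₗ[R] R).toMultilinearMap
  have hexpand : (M + z • N).det = M.det + ∑ i, (M.updateRow i (z • N i)).det +
      ∑ s : Finset ι with 2 ≤ s.card, det (of (s.piecewise (z • N) M)) := by
    have h := D.map_add_eq_map_add_linearDeriv_add M (z • N)
    have hlinear : D.linearDeriv M (z • N) = ∑ i, (M.updateRow i (z • N i)).det :=
      D.linearDeriv_apply _ _
    rwa [hlinear] at h
  simp only [det_updateRow_smul, ← Finset.mul_sum, sum_det_updateRow_eq_trace] at hexpand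
  rw [hexpand, add_sub_cancel_left]
  exact Finset.dvd_sum fun s hs => (pow_dvd_pow z (Finset.mem_filter.1 hs).2).trans
    (pow_card_dvd_det_piecewise_smul M N z s)

lemma trace_adjugate_mul_eq_derivative_eval [IsDomain R] [Infinite R] {M N : Matrix ι ι R}
    {q : R[X]} (h : ∀ z, (M + z • N).det = q.eval z) :
    (M.adjugate * N).trace = q.derivative.eval 0 := by
  have hdet : (M.map C + (X : R[X]) • N.map C).det = q := by
    refine Polynomial.funext fun z => ?_
    rw [← h z, ← coe_evalRingHom, RingHom.map_det]
    congr 1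
    ext i j
    simp [mul_comm z]
  obtain ⟨r, hr⟩ := sq_dvd_det_add_smul_sub (M.map C) (N.map C) (X : R[X])
  rw [hdet, sub_eq_iff_eq_add, ← C.mapMatrix_apply, ← C.mapMatrix_apply, ← RingHom.map_det,
    ← RingHom.map_adjugate, ← map_mul, C.mapMatrix_apply, ← AddMonoidHom.map_trace] at hr
  rw [hr]
  simp [derivative_mul]

lemma adjugate_scalar_sub_of_charpoly {M : Matrix ι ι R} {n : ℕ} {c : R}
    (h : M.charpoly = X ^ n - C c) (t : R) :
    (scalar ι t - M).adjugate = ∑ k ∈ Finset.range n, scalar ι t ^ k * M ^ (n - 1 - k) := by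
  have hpow : M ^ n = scalar ι c := by
    have hcayley := M.aeval_self_charpoly
    rwa [h, map_sub, map_pow, aeval_X, aeval_C, sub_eq_zero] at hcayley
  -- Over `R[X]` the characteristic matrix can be cancelled, even if `scalar ι t - M` is singular.
  have hfactor : (∑ k ∈ Finset.range n, scalar ι X ^ k * C.mapMatrix M ^ (n - 1 - k)) *
      charmatrix M = (charmatrix M).adjugate * charmatrix M := by
    have hcomm : Commute (scalar ι (X : R[X])) (C.mapMatrix M) := scalar_commute X (.all X) _
    rw [adjugate_mul, ← charpoly, charmatrix, hcomm.geom_sum₂_mul n, ← map_pow, ← map_pow, hpow, h]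
    ext i j
    by_cases hij : i = j <;> simp [hij]
  have hadjugate := (isRegular_of_isLeftRegular_det M.charpoly_monic.isRegular.left).right hfactor
  have hX : (evalRingHom t).mapMatrix (scalar ι X) = scalar ι t := by
    ext i j
    by_cases hij : i = j <;> simp [hij]
  have hM : (evalRingHom t).mapMatrix (C.mapMatrix M) = M := by
    ext i j
    simp
  simpa only [map_sum, map_mul, map_pow, map_sub, RingHom.map_adjugate, charmatrix, hX, hM]
    using (congrArg (evalRingHom t).mapMatrix hadjugate).symm

lemma adjugate_one_sub_of_charpoly {M : Matrix ι ι R} {n : ℕ} {c : R}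
    (h : M.charpoly = X ^ n - C c) : (1 - M).adjugate = ∑ k ∈ Finset.range n, M ^ k := by
  simpa [Finset.sum_range_reflect (M ^ ·)] using adjugate_scalar_sub_of_charpoly h 1

variable [IsAlgClosed K]

lemma charpoly_eq_X_pow_card_sub_C {M : Matrix ι ι K} {c : K}
    (hcard : (Fintype.card ι : K) ≠ 0)
    (h : ∀ s : K, (s • M - 1).det = 0 ↔ s ^ Fintype.card ι * c = 1) :
    M.charpoly = X ^ Fintype.card ι - C c := by
  rw [← M.charpoly_natDegree_eq_dim] at hcard ⊢
  refine eq_X_pow_sub_C_of_isRoot_iff M.charpoly_monic hcard fun t ht => ?_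
  have hrescale : scalar ι t - M = (-t) • (t⁻¹ • M - 1) := by
    rw [smul_sub, smul_smul, neg_mul, mul_inv_cancel₀ ht, neg_one_smul, neg_smul, sub_neg_eq_add,
      scalar_apply, smul_one_eq_diagonal, add_comm, sub_eq_add_neg]
  rw [IsRoot, eval_charpoly, hrescale, det_smul, mul_eq_zero,
    or_iff_right (pow_ne_zero _ (neg_ne_zero.2 ht)), h, M.charpoly_natDegree_eq_dim, inv_pow,
    inv_mul_eq_one₀ (pow_ne_zero _ ht)]

end Matrix

section RankOne

variable {ι K : Type*} [Fintype ι] [Field K]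

lemma exists_eq_vecMulVec_of_rank_le_one {P : Matrix ι ι K} (h : P.rank ≤ 1) :
    ∃ v w, P = vecMulVec v w := by
  classical
  obtain ⟨v, hv⟩ := finrank_le_one_iff.1 h
  choose w hw using fun j => hv ⟨P.mulVecLin (Pi.single j 1), LinearMap.mem_range_self _ _⟩
  refine ⟨v.1, w, ?_⟩
  ext i j
  simpa [vecMulVec_apply, mul_comm] using (congrFun (congrArg Subtype.val (hw j)) i).symm

lemma mul_mul_self_of_rank_le_one {P : Matrix ι ι K} (h : P.rank ≤ 1) (Z : Matrix ι ι K) :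
    P * Z * P = (P * Z).trace • P := by
  obtain ⟨v, w, rfl⟩ := exists_eq_vecMulVec_of_rank_le_one h
  rw [vecMulVec_mul, vecMulVec_mul_vecMulVec, trace_vecMulVec, vecMulVec_smul, dotProduct_comm]

lemma rank_le_rootMultiplicity_charpoly [DecidableEq ι] {A P : Matrix ι ι K} {μ : K}
    (h : A * P = μ • P) : P.rank ≤ A.charpoly.rootMultiplicity μ := by
  have hrange : LinearMap.range P.mulVecLin ≤ Module.End.eigenspace A.mulVecLin μ := by
    rintro _ ⟨v, rfl⟩
    rw [Module.End.mem_eigenspace_iff, mulVecLin_apply, mulVecLin_apply, mulVec_mulVec, h,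
      smul_mulVec]
  calc P.rank ≤ Module.finrank K (Module.End.eigenspace A.mulVecLin μ) :=
        Submodule.finrank_mono hrange
    _ ≤ A.charpoly.rootMultiplicity μ := by
        rw [← charpoly_mulVecLin]
        exact LinearMap.finrank_eigenspace_le A.mulVecLin μ

end RankOne

section Normal

open scoped ComplexOrder

variable {ι κ 𝕜 : Type*} [Fintype ι] [RCLike 𝕜]

lemma conjTranspose_mul_eq_zero_of_normal {N : Matrix ι ι 𝕜} {P : Matrix ι κ 𝕜}
    (hN : N * Nᴴ = Nᴴ * N) (h : N * P = 0) : Nᴴ * P = 0 := by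
  rw [← conjTranspose_mul_self_eq_zero]
  calc (Nᴴ * P)ᴴ * (Nᴴ * P) = Pᴴ * (N * Nᴴ) * P := by
        simp only [conjTranspose_mul, conjTranspose_conjTranspose, Matrix.mul_assoc]
    _ = 0 := by rw [hN, Matrix.mul_assoc, Matrix.mul_assoc, h, Matrix.mul_zero, Matrix.mul_zero]

lemma mul_eq_self_of_normal [DecidableEq ι] {A P : Matrix ι ι 𝕜} (hA : A * Aᴴ = Aᴴ * A)
    (hP : Pᴴ = P) (h : (A - 1) * P = 0) : P * A = P := by
  have hnormal : (A - 1) * (A - 1)ᴴ = (A - 1)ᴴ * (A - 1) := by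
    simp only [conjTranspose_sub, conjTranspose_one, mul_sub, sub_mul, one_mul, mul_one, hA]
    abel
  have hadjoint : P * (A - 1) = 0 := by
    simpa [hP] using congrArg conjTranspose (conjTranspose_mul_eq_zero_of_normal hnormal h)
  rwa [mul_sub, mul_one, sub_eq_zero] at hadjoint

end Normal

section Spectrum

open Polynomial

variable {ι K : Type*} [Fintype ι] [DecidableEq ι] [Field K]

/-- For `n = Fintype.card ι`, the proper projective joint spectrum of `A`, `B`, `A * B`, `B * A`
is the hypersurface `xⁿ + yⁿ + (-1)ⁿ⁻¹ (ω z + w)ⁿ = 1`. -/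
def HasTwistedFermatSpectrum (ω : K) (A B : Matrix ι ι K) : Prop :=
  ∀ x y z w : K, (x • A + y • B + z • (A * B) + w • (B * A) - 1).det = 0 ↔
    x ^ Fintype.card ι + y ^ Fintype.card ι +
      (-1) ^ (Fintype.card ι - 1) * (ω * z + w) ^ Fintype.card ι = 1

namespace HasTwistedFermatSpectrum

variable [IsAlgClosed K] {ω : K} {A B P : Matrix ι ι K}

lemma charpoly_pencil (hspec : HasTwistedFermatSpectrum ω A B) (hcard : (Fintype.card ι : K) ≠ 0)
    (x y z w : K) : (x • A + y • B + z • (A * B) + w • (B * A)).charpoly =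
      X ^ Fintype.card ι - C (x ^ Fintype.card ι + y ^ Fintype.card ι +
        (-1) ^ (Fintype.card ι - 1) * (ω * z + w) ^ Fintype.card ι) := by
  refine charpoly_eq_X_pow_card_sub_C hcard fun s => ?_
  have h := hspec (s * x) (s * y) (s * z) (s * w)
  simp only [mul_smul, ← smul_add] at h
  rw [h, mul_left_comm ω, ← mul_add, mul_pow, mul_pow, mul_pow, mul_left_comm, ← mul_add,
    ← mul_add]

lemma charpoly_left (hspec : HasTwistedFermatSpectrum ω A B) (hcard : (Fintype.card ι : K) ≠ 0) :
    A.charpoly = X ^ Fintype.card ι - C 1 := by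
  have hcard' : Fintype.card ι ≠ 0 := ne_zero_of_map (f := Nat.castRingHom K) hcard
  simpa [hcard'] using hspec.charpoly_pencil hcard 1 0 0 0

lemma charpoly_smul_right (hspec : HasTwistedFermatSpectrum ω A B)
    (hcard : (Fintype.card ι : K) ≠ 0) (y : K) :
    (y • B).charpoly = X ^ Fintype.card ι - C (y ^ Fintype.card ι) := by
  have hcard' : Fintype.card ι ≠ 0 := ne_zero_of_map (f := Nat.castRingHom K) hcard
  simpa [hcard'] using hspec.charpoly_pencil hcard 0 y 0 0

lemma det_one_sub_mul_one_sub_add_smul (hspec : HasTwistedFermatSpectrum ω A B)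
    (hcard : (Fintype.card ι : K) ≠ 0) (y z : K) :
    ((1 - y • B) * (1 - A) + z • (A * B)).det =
      (y + ω * z) ^ Fintype.card ι - y ^ Fintype.card ι := by
  have hpencil : (1 - y • B) * (1 - A) + z • (A * B) =
      scalar ι 1 - ((1 : K) • A + y • B + (-z) • (A * B) + (-y) • (B * A)) := by
    simp only [sub_mul, mul_sub, one_mul, mul_one, Matrix.smul_mul, neg_smul, one_smul, map_one]
    abel
  obtain ⟨m, hm⟩ := Nat.exists_eq_add_one_of_ne_zero (n := Fintype.card ι)
    (ne_zero_of_map (f := Nat.castRingHom K) hcard)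
  have hsign : (-1 : K) ^ m * (ω * -z + -y) ^ (m + 1) = -(y + ω * z) ^ (m + 1) := by
    rw [show ω * -z + -y = -1 * (y + ω * z) by ring, mul_pow, ← mul_assoc, ← pow_add,
      Odd.neg_one_pow ⟨m, by ring⟩, neg_one_mul]
  rw [hpencil, ← eval_charpoly, hspec.charpoly_pencil hcard, hm, Nat.add_sub_cancel, hsign]
  simp only [eval_sub, eval_pow, eval_X, eval_C, one_pow]
  ring

lemma sum_trace_adjugate_one_sub_mul (hspec : HasTwistedFermatSpectrum ω A B)
    (hcard : (Fintype.card ι : K) ≠ 0) (y : K) :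
    ∑ k ∈ Finset.range (Fintype.card ι),
        ((1 - A).adjugate * (B ^ k * A * B)).trace * y ^ k =
      Fintype.card ι * ω * y ^ (Fintype.card ι - 1) := by
  have hjacobi := trace_adjugate_mul_eq_derivative_eval
    (q := (C y + C ω * X) ^ Fintype.card ι - C (y ^ Fintype.card ι)) fun z => by
      simpa using hspec.det_one_sub_mul_one_sub_add_smul hcard y z
  rw [adjugate_mul_distrib, adjugate_one_sub_of_charpoly (hspec.charpoly_smul_right hcard y),
    Matrix.mul_assoc, Finset.sum_mul, Finset.mul_sum, trace_sum] at hjacobi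
  calc _ = ∑ k ∈ Finset.range (Fintype.card ι),
        ((1 - A).adjugate * ((y • B) ^ k * (A * B))).trace := by
        simp only [_root_.smul_pow, Matrix.smul_mul, Matrix.mul_smul, trace_smul, smul_eq_mul,
          Matrix.mul_assoc, mul_comm]
    _ = eval 0 (derivative ((C y + C ω * X) ^ Fintype.card ι - C (y ^ Fintype.card ι))) :=
        hjacobi
    _ = Fintype.card ι * ω * y ^ (Fintype.card ι - 1) := by simp [derivative_pow, mul_right_comm]

lemma trace_adjugate_one_sub_mul (hspec : HasTwistedFermatSpectrum ω A B)
    (hcard : (Fintype.card ι : K) ≠ 0) {k : ℕ} (hk : k < Fintype.card ι) :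
    ((1 - A).adjugate * (B ^ k * A * B)).trace =
      if k = Fintype.card ι - 1 then Fintype.card ι * ω else 0 := by
  have hpoly : ∑ k ∈ Finset.range (Fintype.card ι),
        monomial k ((1 - A).adjugate * (B ^ k * A * B)).trace =
      monomial (Fintype.card ι - 1) (Fintype.card ι * ω) := by
    refine Polynomial.funext fun y => ?_
    simpa [eval_finsetSum] using hspec.sum_trace_adjugate_one_sub_mul hcard y
  simpa [finsetSum_coeff, coeff_monomial, hk, eq_comm] using congrArg (coeff · k) hpoly

lemma one_sub_mul_adjugate (hspec : HasTwistedFermatSpectrum ω A B)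
    (hcard : (Fintype.card ι : K) ≠ 0) : (1 - A) * (1 - A).adjugate = 0 := by
  have hdet : (1 - A).det = 0 := by
    simpa [eval_charpoly] using congrArg (eval 1) (hspec.charpoly_left hcard)
  rw [mul_adjugate, hdet, zero_smul]

lemma card_smul_eq_adjugate (hspec : HasTwistedFermatSpectrum ω A B)
    (hcard : (Fintype.card ι : K) ≠ 0) (hPA : P * A = P)
    (hfix : ∀ v, (A - 1) *ᵥ v = 0 → P *ᵥ v = v) :
    (Fintype.card ι : K) • P = (1 - A).adjugate := by
  have hpow (k : ℕ) : P * A ^ k = P := by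
    induction k with
    | zero => rw [pow_zero, mul_one]
    | succ k ih => rw [pow_succ, ← mul_assoc, ih, hPA]
  have hker : (A - 1) * (1 - A).adjugate = 0 := by
    rw [← neg_sub 1 A, neg_mul, hspec.one_sub_mul_adjugate hcard, neg_zero]
  calc (Fintype.card ι : K) • P = P * (1 - A).adjugate := by
        rw [adjugate_one_sub_of_charpoly (hspec.charpoly_left hcard), Finset.mul_sum]
        simp [hpow, Nat.cast_smul_eq_nsmul]
    _ = (1 - A).adjugate := Matrix.ext_col fun j => hfix _ (congrArg (Matrix.col · j) hker)

lemma left_mul_eq_self (hspec : HasTwistedFermatSpectrum ω A B)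
    (hcard : (Fintype.card ι : K) ≠ 0) (hPA : P * A = P)
    (hfix : ∀ v, (A - 1) *ᵥ v = 0 → P *ᵥ v = v) : A * P = P := by
  have h := hspec.one_sub_mul_adjugate hcard
  rw [← hspec.card_smul_eq_adjugate hcard hPA hfix, Matrix.mul_smul, smul_eq_zero_iff_right hcard,
    sub_mul, one_mul, sub_eq_zero] at h
  exact h.symm

lemma rank_le_one (hspec : HasTwistedFermatSpectrum ω A B) (hcard : (Fintype.card ι : K) ≠ 0)
    (hAP : A * P = P) : P.rank ≤ 1 := by
  have hsimple : A.charpoly.rootMultiplicity 1 ≤ 1 := by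
    rw [hspec.charpoly_left hcard]
    exact rootMultiplicity_le_one_of_separable (separable_X_pow_sub_C 1 hcard one_ne_zero) 1
  exact (rank_le_rootMultiplicity_charpoly (by rwa [one_smul])).trans hsimple

lemma mul_pow_mul_mul_mul_self (hspec : HasTwistedFermatSpectrum ω A B)
    (hcard : (Fintype.card ι : K) ≠ 0) (hPA : P * A = P)
    (hfix : ∀ v, (A - 1) *ᵥ v = 0 → P *ᵥ v = v) {k : ℕ} (hk : k < Fintype.card ι) :
    P * B ^ k * A * B * P = (if k = Fintype.card ι - 1 then ω else 0) • P := by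
  have htrace : (P * (B ^ k * A * B)).trace = if k = Fintype.card ι - 1 then ω else 0 := by
    refine mul_left_cancel₀ hcard ?_
    rw [← smul_eq_mul, ← trace_smul, ← Matrix.smul_mul,
      hspec.card_smul_eq_adjugate hcard hPA hfix, hspec.trace_adjugate_one_sub_mul hcard hk,
      mul_ite, mul_zero]
  have hrank := hspec.rank_le_one hcard (hspec.left_mul_eq_self hcard hPA hfix)
  rw [← htrace, ← mul_mul_self_of_rank_le_one hrank]
  simp only [mul_assoc]

end HasTwistedFermatSpectrum

-- The conditions on `P` say that it projects onto `ker (A - 1)` along `range (A - 1)`.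
theorem stmt_14_general [IsAlgClosed K] {ω : K} {A B P : Matrix ι ι K}
    (hcard : (Fintype.card ι : K) ≠ 0) (hspec : HasTwistedFermatSpectrum ω A B) (hPA : P * A = P)
    (hfix : ∀ v, (A - 1) *ᵥ v = 0 → P *ᵥ v = v) :
    (∀ r, r + 1 < Fintype.card ι → P * B ^ r * A * B * P = 0) ∧
      P * B ^ (Fintype.card ι - 1) * A * B * P = ω • P := by
  have hcard' : Fintype.card ι ≠ 0 := ne_zero_of_map (f := Nat.castRingHom K) hcard
  constructor
  · intro r hr
    rw [hspec.mul_pow_mul_mul_mul_self hcard hPA hfix (by lia), if_neg (by lia), zero_smul]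
  · rw [hspec.mul_pow_mul_mul_mul_self hcard hPA hfix (by lia), if_pos rfl]

end Spectrum

theorem stmt_14 (n : ℕ) (hn : 2 ≤ n)
    (ω : ℂ) (hω : ω = Complex.exp (2 * Real.pi * Complex.I / n))
    (A B : Matrix (Fin n) (Fin n) ℂ)
    (hA : A * Aᴴ = Aᴴ * A)
    (hB : ‖Matrix.toEuclideanCLM (𝕜 := ℂ) B‖ = 1)
    (hspec : {p : ℂ × ℂ × ℂ × ℂ |
        (p.1 • A + p.2.1 • B + p.2.2.1 • (A * B) + p.2.2.2 • (B * A) - 1).det = 0} =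
      {p : ℂ × ℂ × ℂ × ℂ |
        p.1 ^ n + p.2.1 ^ n + (-1 : ℂ) ^ (n - 1) * (ω * p.2.2.1 + p.2.2.2) ^ n = 1})
    -- `P₀` is the orthogonal projection onto `ker (A - 1)`
    (P₀ : Matrix (Fin n) (Fin n) ℂ)
    (hP₀herm : P₀ᴴ = P₀) (hP₀idem : P₀ * P₀ = P₀)
    (hP₀range : (A - 1) * P₀ = 0)
    (hP₀ker : ∀ v : Fin n → ℂ, (A - 1).mulVec v = 0 → P₀.mulVec v = v) :
    (∀ r : ℕ, 1 ≤ r → r ≤ n - 2 → P₀ * B ^ r * A * B * P₀ = 0) ∧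
    P₀ * B ^ (n - 1) * A * B * P₀ = ω • P₀ := by
  have hcard : (Fintype.card (Fin n) : ℂ) ≠ 0 := by
    rw [Fintype.card_fin, Nat.cast_ne_zero]
    lia
  have hfermat : HasTwistedFermatSpectrum ω A B := fun x y z w => by
    simpa using Set.ext_iff.1 hspec (x, y, z, w)
  have hPA : P₀ * A = P₀ := mul_eq_self_of_normal hA hP₀herm hP₀range
  obtain ⟨hzero, htop⟩ := stmt_14_general hcard hfermat hPA hP₀ker
  rw [Fintype.card_fin] at hzero htop
  exact ⟨fun r _ hr => hzero r (by lia), htop⟩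
end
end
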